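/- arXiv:2103.05195 — 2 statements merged into one kernel-verified Lean document; each statement's English description precedes it below -/
import Mathlib

section
/- For every permutation w ∈ S_n, S_w(1,1,…,1) ≥ n₁₃₂(w) + 1, where S_w is the Schubert polynomial of w evaluated at all variables equal to 1 and n₁₃₂(w) is the number of 132-patterns in w. -/
namespace Schub

open MvPolynomial

/-- The number of `132`-patterns of `w ∈ S_n`. -/
def n132 (n : ℕ) (w : Equiv.Perm (Fin n)) : ℕ :=
  (Finset.univ.filter fun t : Fin n × Fin n × Fin n =>
    t.1 < t.2.1 ∧ t.2.1 < t.2.2 ∧ w t.1 < w t.2.2 ∧ w t.2.2 < w t.2.1).card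

/-!
Inside `S_n`, Monk's formula `x_r S_v = ∑_{j > r} S_{v t_{rj}} - ∑_{j < r} S_{v t_{jr}}`, summed
over Bruhat covers of `v`, holds whenever position `r` is not a right-to-left maximum of `v`.
Indeed, by induction every adjacent divided difference of the two sides agrees, so their difference
is a symmetric polynomial; it does not involve the last variable and has no constant term, so it
vanishes.

If `r` is the first position of `w` that is not a right-to-left maximum, the negative sum is empty,
and specialising all variables to `1` gives `S_w(1) = ∑_j S_{w t_{rj}}(1)`. Let `s` be the first
position after `r` with `w s > w r`, and `t` the position of the least value above `w r`. A
`132`-pattern of `w` yields one of `w t_{rt}` unless it has the form `(r, j, t)`; apart from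
`j = s`, these yield patterns `(s, j, t)` of `w t_{rs}`. So the bound for `w` follows from the
bounds for `w t_{rs}` and `w t_{rt}`.
-/

open Equiv (Perm swap swap_apply_left swap_apply_right swap_apply_self swap_apply_def
  swap_apply_of_ne_of_ne)

section DividedDifferenceOfVariable

variable {σ : Type*} [DecidableEq σ]

/-- The divided difference of the variable `x_r` along `swap i j`. -/
def divDiffVar (i j r : σ) : ℤ := if r = i then 1 else if r = j then -1 else 0

theorem divDiffVar_swap {i j : σ} (hij : i ≠ j) (r : σ) :
    divDiffVar i j (swap i j r) = -divDiffVar i j r := by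
  grind [divDiffVar]

theorem divDiffVar_smul_mul_swap {M : Type*} [AddCommGroup M] (f : Perm σ → M) (v : Perm σ)
    (i j r : σ) : divDiffVar i j r • f (v * swap r (swap i j r)) =
      divDiffVar i j r • f (v * swap i j) := by
  unfold divDiffVar
  split_ifs with h h'
  · rw [h, swap_apply_left]
  · rw [h', swap_apply_right, Equiv.swap_comm]
  · rw [zero_smul, zero_smul]

end DividedDifferenceOfVariable

section Permutations

theorem perm_induction_of_swap_ascent {α : Type*} [LinearOrder α] [Finite α]
    {P : Perm α → Prop} (ih : ∀ w, (∀ a b, a < b → w a < w b → P (w * swap a b)) → P w)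
    (w : Perm α) : P w :=
  (InvImage.wf (fun v : Perm α => toColex ⇑v) wellFounded_lt).induction w fun w hw =>
    ih w fun _ _ hab h => hw _ (Pi.colex_asc hab.le h)

theorem perm_induction_of_swap_descent {α : Type*} [LinearOrder α] [Finite α]
    {P : Perm α → Prop} (ih : ∀ w, (∀ a b, a < b → w b < w a → P (w * swap a b)) → P w)
    (w : Perm α) : P w :=
  (InvImage.wf (fun v : Perm α => toLex ⇑v) wellFounded_lt).induction w fun w hw =>
    ih w fun _ _ hab h => hw _ (Pi.lex_desc hab.le h)

theorem eq_revPerm_of_antitone {n : ℕ} {w : Perm (Fin n)} (hw : Antitone w) :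
    w = Fin.revPerm := by
  have hmono : StrictMono fun i => w (Fin.rev i) := fun _ _ hab =>
    hw.strictAnti_of_injective w.injective (Fin.rev_lt_rev.2 hab)
  have hsurj : Function.Surjective fun i => w (Fin.rev i) :=
    w.surjective.comp Fin.rev_surjective
  have hid : (fun i => w (Fin.rev i)) = id :=
    (hmono.range_inj strictMono_id).1 (hsurj.range_eq.trans Set.range_id.symm)
  ext1 i
  simpa using congrFun hid i.rev

theorem exists_covBy_ascent {n : ℕ} {w : Perm (Fin n)} (hw : w ≠ Fin.revPerm) :
    ∃ k k', k ⋖ k' ∧ w k < w k' := by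
  by_contra! hdesc
  exact hw (eq_revPerm_of_antitone ((antitone_iff_forall_covBy w).2 hdesc))

variable {α : Type*} [LinearOrder α]

theorem mul_swap_mul_swap_swap (v : Perm α) (k k' r j : α) :
    v * swap k k' * swap (swap k k' r) (swap k k' j) = v * swap r j * swap k k' := by
  rw [mul_assoc, Equiv.mul_swap_eq_swap_mul, swap_apply_self, swap_apply_self, ← mul_assoc]

/-- `v * swap a b` covers `v` in the strong Bruhat order, with `a < b`. -/
def IsBruhatCover (v : Perm α) (a b : α) : Prop :=
  a < b ∧ v a < v b ∧ ∀ p, a < p → p < b → ¬(v a < v p ∧ v p < v b)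

instance [Fintype α] (v : Perm α) (a b : α) : Decidable (IsBruhatCover v a b) :=
  inferInstanceAs (Decidable (_ ∧ _))

variable {v : Perm α} {k k' a b : α}

theorem isBruhatCover_iff_of_covBy (hk : k ⋖ k') : IsBruhatCover v k k' ↔ v k < v k' :=
  ⟨fun h => h.2.1, fun h => ⟨hk.lt, h, fun _ hp hp' => (hk.2 hp hp').elim⟩⟩

theorem IsBruhatCover.ascent_mul_swap (h : IsBruhatCover v a b) (hk : k ⋖ k')
    (hne : b ≠ swap k k' a) (hv : v k < v k') :
    (v * swap a b) k < (v * swap a b) k' := by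
  obtain ⟨hab, hvab, hgap⟩ := h
  rw [Equiv.Perm.mul_apply, Equiv.Perm.mul_apply]
  rcases eq_or_ne a k with rfl | hak
  · have hb : k' < b := (hk.ge_of_gt hab).lt_of_ne (by simpa using hne.symm)
    rw [swap_apply_left, swap_apply_of_ne_of_ne hk.ne' hb.ne]
    exact (not_lt.1 fun h => hgap k' hk.lt hb ⟨hv, h⟩).lt_of_ne (v.injective.ne hb.ne')
  rcases eq_or_ne b k' with rfl | hbk
  · have ha : a < k := (hk.le_of_lt hab).lt_of_ne hak
    rw [swap_apply_right, swap_apply_of_ne_of_ne ha.ne' hk.ne]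
    exact (not_lt.1 fun h => hgap k ha hk.lt ⟨h, hv⟩).lt_of_ne (v.injective.ne ha.ne')
  grind

theorem swap_lt_swap_iff_of_covBy (hk : k ⋖ k') (hne : b ≠ swap k k' a) :
    swap k k' a < swap k k' b ↔ a < b := by
  have := hk.lt
  have ha := @hk.2 a
  have hb := @hk.2 b
  simp only [swap_apply_def] at hne ⊢
  grind

theorem isBruhatCover_mul_swap_iff (hk : k ⋖ k') (hne : b ≠ swap k k' a) (hv : v k' < v k) :
    IsBruhatCover (v * swap k k') (swap k k' a) (swap k k' b) ↔
      IsBruhatCover v a b ∧ (v * swap a b) k' < (v * swap a b) k := by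
  have hinj (x y : α) : v x = v y ↔ x = y := v.injective.eq_iff
  have hgap : (∀ p, swap k k' a < p → p < swap k k' b →
        ¬((v * swap k k') (swap k k' a) < (v * swap k k') p ∧
          (v * swap k k') p < (v * swap k k') (swap k k' b))) ↔
      ∀ p, swap k k' a < swap k k' p → swap k k' p < swap k k' b →
        ¬(v a < v p ∧ v p < v b) := by
    rw [(swap k k').surjective.forall]
    simp only [Equiv.Perm.mul_apply, swap_apply_self]
  rw [IsBruhatCover, hgap, IsBruhatCover, swap_lt_swap_iff_of_covBy hk hne]
  simp only [Equiv.Perm.mul_apply, swap_apply_self]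
  simp only [swap_apply_def] at hne ⊢
  have := hk.lt
  have hka := @hk.2 a
  have hkb := @hk.2 b
  constructor
  · rintro ⟨hab, hvab, h⟩
    have := h k
    have := h k'
    refine ⟨⟨hab, hvab, fun p hap hpb => ?_⟩, ?_⟩
    · have := h p
      have := @hk.2 p
      grind
    · grind
  · rintro ⟨⟨hab, hvab, h⟩, hd⟩
    refine ⟨hab, hvab, fun p hap hpb => ?_⟩
    have := h p
    have := @hk.2 p
    grind

/-- Position `r` is a right-to-left maximum of `w`. -/
def IsRightToLeftMax (w : Perm α) (r : α) : Prop := ∀ j, r < j → w j ≤ w r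

theorem not_isRightToLeftMax_mul_swap (hk : k ⋖ k') (hv : v k' < v k)
    (ha : ¬IsRightToLeftMax v a) : ¬IsRightToLeftMax (v * swap k k') (swap k k' a) := by
  unfold IsRightToLeftMax at *
  push Not at ha ⊢
  obtain ⟨j, haj, hj⟩ := ha
  have hne : j ≠ swap k k' a := by
    rintro rfl
    have := hk.lt
    simp only [swap_apply_def] at haj hj
    grind
  exact ⟨swap k k' j, (swap_lt_swap_iff_of_covBy hk hne).2 haj, by simpa using hj⟩

/-- The divided difference `∂_{k k'}` acting on Schubert polynomials by their indices. -/
def divDiffIndex {M : Type*} [Zero M] (S : Perm α → M) (k k' : α) (v : Perm α) : M :=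
  if v k' < v k then S (v * swap k k') else 0

variable [Fintype α]

/-- The inversions of `w`; their number is the Coxeter length of `w`. -/
def inversions (w : Perm α) : Finset (α × α) := {t | t.1 < t.2 ∧ w t.2 < w t.1}

theorem card_inversions_pos {w : Perm α} (hab : a < b) (h : w b < w a) :
    0 < (inversions w).card :=
  Finset.card_pos.2 ⟨(a, b), by simp [inversions, hab, h]⟩

theorem card_inversions_mul_swap {w : Perm α} (hk : k ⋖ k') (h : w k < w k') :
    (inversions (w * swap k k')).card = (inversions w).card + 1 := by
  have hinsert : inversions (w * swap k k') =
      insert (k, k') ((inversions w).map ((swap k k').prodCongr (swap k k')).toEmbedding) := by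
    ext ⟨a, b⟩
    have := hk.lt
    have := @hk.2 a
    have := @hk.2 b
    simp only [inversions, Finset.mem_filter, Finset.mem_univ, true_and, Finset.mem_insert,
      Finset.mem_map_equiv, Equiv.prodCongr_symm, Equiv.symm_swap, Equiv.prodCongr_apply,
      Prod.map, Prod.mk.injEq, Equiv.Perm.mul_apply, swap_apply_def]
    grind
  have hnotMem : (k, k') ∉
      (inversions w).map ((swap k k').prodCongr (swap k k')).toEmbedding := by
    simp [inversions, Finset.mem_map_equiv, hk.lt.not_gt]
  rw [hinsert, Finset.card_insert_of_notMem hnotMem, Finset.card_map]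

theorem card_inversions_revPerm (n : ℕ) :
    (inversions (Fin.revPerm : Perm (Fin n))).card = ∑ i : Fin n, (n - 1 - (i : ℕ)) := by
  simp only [inversions, Fin.revPerm_apply, Fin.rev_lt_rev, and_self, Finset.card_filter,
    ← Finset.univ_product_univ, Finset.sum_product]
  simp only [← Finset.card_filter, ← Fin.card_Ioi, Finset.filter_lt_eq_Ioi]

/-- The coefficient of `S_{v t_{rj}}` in Monk's formula for `x_r S_v`: it is `1` if `j > r` and `-1`
if `j < r` when `v t_{rj}` covers `v`, and `0` otherwise. -/
def monkCoeff (v : Perm α) (r j : α) : ℤ :=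
  (if IsBruhatCover v r j then 1 else 0) - (if IsBruhatCover v j r then 1 else 0)

variable {r j : α}

theorem monkCoeff_swap_of_ascent (hk : k ⋖ k') (hv : v k < v k') (r : α) :
    monkCoeff v r (swap k k' r) = divDiffVar k k' r := by
  have hanti : ¬IsBruhatCover v k' k := fun h => h.1.not_gt hk.lt
  have hcov : IsBruhatCover v k k' := (isBruhatCover_iff_of_covBy hk).2 hv
  grind [monkCoeff, divDiffVar]

theorem monkCoeff_swap_of_descent (hk : k ⋖ k') (hv : v k' < v k) (r : α) :
    monkCoeff v r (swap k k' r) = 0 := by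
  have hanti : ¬IsBruhatCover v k' k := fun h => h.1.not_gt hk.lt
  have hcov : ¬IsBruhatCover v k k' := fun h => h.2.1.not_gt hv
  grind [monkCoeff]

theorem monkCoeff_eq_zero_of_ascent (hk : k ⋖ k') (hj : j ≠ swap k k' r) (hv : v k < v k')
    (hd : (v * swap r j) k' < (v * swap r j) k) : monkCoeff v r j = 0 := by
  have hr : r ≠ swap k k' j := by rwa [ne_comm, ne_eq, Equiv.swap_apply_eq_iff]
  have hrj : ¬IsBruhatCover v r j := fun h => (h.ascent_mul_swap hk hj hv).not_gt hd
  have hjr : ¬IsBruhatCover v j r := fun h =>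
    (h.ascent_mul_swap hk hr hv).not_gt (by rwa [Equiv.swap_comm])
  rw [monkCoeff, if_neg hrj, if_neg hjr, sub_zero]

theorem monkCoeff_mul_swap (hk : k ⋖ k') (hj : j ≠ swap k k' r) (hv : v k' < v k) :
    monkCoeff (v * swap k k') (swap k k' r) (swap k k' j) =
      if (v * swap r j) k' < (v * swap r j) k then monkCoeff v r j else 0 := by
  have hr : r ≠ swap k k' j := by rwa [ne_comm, ne_eq, Equiv.swap_apply_eq_iff]
  simp only [monkCoeff, isBruhatCover_mul_swap_iff hk hj hv, isBruhatCover_mul_swap_iff hk hr hv,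
    Equiv.swap_comm j r]
  by_cases hd : (v * swap r j) k' < (v * swap r j) k <;>
    simp only [hd, and_true, and_false, if_true, if_false, sub_zero]

section MonkSum

variable {M : Type*} [AddCommGroup M]

/-- The right-hand side of Monk's formula for `x_r S_v`. -/
def monkSum (S : Perm α → M) (v : Perm α) (r : α) : M := ∑ j, monkCoeff v r j • S (v * swap r j)

theorem monkSum_divDiffIndex_of_ascent (S : Perm α → M) (hk : k ⋖ k') (hv : v k < v k') (r : α) :
    monkSum (divDiffIndex S k k') v r = divDiffVar k k' r • S v := by
  rw [monkSum, Finset.sum_eq_single (swap k k' r) _ (by simp)]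
  · rw [monkCoeff_swap_of_ascent hk hv, divDiffVar_smul_mul_swap]
    simp [divDiffIndex, hv]
  · intro j _ hj
    unfold divDiffIndex
    split_ifs with hd
    · rw [monkCoeff_eq_zero_of_ascent hk hj hv hd, zero_smul]
    · rw [smul_zero]

theorem monkSum_divDiffIndex_of_descent (S : Perm α → M) (hk : k ⋖ k') (hv : v k' < v k) (r : α) :
    monkSum (divDiffIndex S k k') v r =
      divDiffVar k k' r • S v + monkSum S (v * swap k k') (swap k k' r) := by
  have hasc : (v * swap k k') k < (v * swap k k') k' := by simpa using hv
  have hreindex : monkSum S (v * swap k k') (swap k k' r) =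
      ∑ j, monkCoeff (v * swap k k') (swap k k' r) (swap k k' j) •
        S (v * swap r j * swap k k') := by
    rw [monkSum, ← Equiv.sum_comp (swap k k')]
    simp only [mul_swap_mul_swap_swap]
  rw [← sub_eq_iff_eq_add, hreindex, monkSum, ← Finset.sum_sub_distrib,
    Finset.sum_eq_single (swap k k' r) _ (by simp)]
  · rw [monkCoeff_swap_of_descent hk hv, monkCoeff_swap_of_ascent hk hasc,
      divDiffVar_swap hk.ne, zero_smul, neg_smul, zero_sub, neg_neg,
      divDiffVar_smul_mul_swap (fun u => S (u * swap k k')), Equiv.mul_swap_mul_self]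
  · intro j _ hj
    rw [monkCoeff_mul_swap hk hj hv]
    unfold divDiffIndex
    split_ifs <;> simp

end MonkSum

end Permutations

section Counting

variable {n : ℕ}

theorem n132_revPerm : n132 n Fin.revPerm = 0 := by
  rw [n132, Finset.card_eq_zero, Finset.filter_eq_empty_iff]
  rintro ⟨i, j, k⟩ - ⟨hij, hjk, hik, -⟩
  exact (hij.trans hjk).not_gt (Fin.rev_lt_rev.1 hik)

theorem exists_first_not_isRightToLeftMax {w : Perm (Fin n)} (hw : w ≠ Fin.revPerm) :
    ∃ r, ¬IsRightToLeftMax w r ∧ ∀ a < r, IsRightToLeftMax w a := by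
  obtain ⟨k, k', hk, h⟩ := exists_covBy_ascent hw
  have hnonempty : {a | ¬IsRightToLeftMax w a}.Nonempty := ⟨k, fun hmax => (hmax k' hk.lt).not_gt h⟩
  obtain ⟨r, hr, hmin⟩ := Set.exists_min_image _ id (Set.toFinite _) hnonempty
  exact ⟨r, hr, fun a ha => by_contra fun hnot => (hmin a hnot).not_gt ha⟩

variable {w : Perm (Fin n)} {r s t : Fin n}

theorem exists_first_later_larger {α : Type*} [LinearOrder α] [Finite α] {w : Perm α} {r : α}
    (hr : ¬IsRightToLeftMax w r) :
    ∃ s, r < s ∧ w r < w s ∧ ∀ p, r < p → w r < w p → s ≤ p := by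
  have hnonempty : {p | r < p ∧ w r < w p}.Nonempty := by
    simpa [IsRightToLeftMax, Set.Nonempty] using hr
  obtain ⟨s, hs, hmin⟩ := Set.exists_min_image _ id (Set.toFinite _) hnonempty
  exact ⟨s, hs.1, hs.2, fun p hp hwp => hmin p ⟨hp, hwp⟩⟩

theorem exists_least_larger {α : Type*} [LinearOrder α] [Finite α] {w : Perm α} {r : α}
    (hr : ¬IsRightToLeftMax w r) (hmax : ∀ a < r, IsRightToLeftMax w a) :
    ∃ t, r < t ∧ w r < w t ∧ ∀ p, w r < w p → w t ≤ w p := by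
  have hnonempty : {p | r < p ∧ w r < w p}.Nonempty := by
    simpa [IsRightToLeftMax, Set.Nonempty] using hr
  obtain ⟨t, ⟨hrt, hwt⟩, hmin⟩ := Set.exists_min_image _ w (Set.toFinite _) hnonempty
  refine ⟨t, hrt, hwt, fun p hp => ?_⟩
  rcases lt_trichotomy p r with h | rfl | h
  · exact hmax p h t (h.trans hrt)
  · exact hp.false.elim
  · exact hmin p ⟨h, hp⟩

-- Swapping the adjacent values `w r` and `w t` destroys only the patterns `(r, j, t)`.
theorem n132_le_n132_mul_swap_add (hrt : r < t) (hw : w r < w t)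
    (hleast : ∀ p, w r < w p → w t ≤ w p) :
    n132 n w ≤ n132 n (w * swap r t) + Finset.card {j | r < j ∧ j < t ∧ w r < w j} := by
  unfold n132
  rw [← Finset.card_image_of_injective {j | r < j ∧ j < t ∧ w r < w j}
    (f := fun j : Fin n => (r, j, t)) (fun a b h => by simpa using h)]
  refine (Finset.card_le_card ?_).trans (Finset.card_union_le _ _)
  rintro ⟨i, j, k⟩
  simp only [Finset.mem_filter, Finset.mem_univ, true_and, Finset.mem_union, Finset.mem_image,
    Prod.mk.injEq]
  rintro ⟨hij, hjk, hik, hkj⟩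
  by_cases hrt' : i = r ∧ k = t
  · right
    exact ⟨j, by grind, hrt'.1.symm, rfl, hrt'.2.symm⟩
  · left
    have := hleast i
    have := hleast j
    have := hleast k
    have hinj (x y : Fin n) : w x = w y ↔ x = y := w.injective.eq_iff
    simp only [Equiv.Perm.mul_apply, swap_apply_def]
    grind

-- Each such `j ≠ s` gives the pattern `(s, j, t)` of `w * swap r s`.
theorem card_later_larger_le (hfirst : ∀ p, r < p → w r < w p → s ≤ p) (hw : w r < w t)
    (hleast : ∀ p, w r < w p → w t ≤ w p) :
    Finset.card {j | r < j ∧ j < t ∧ w r < w j} ≤ n132 n (w * swap r s) + 1 := by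
  unfold n132
  rw [← Finset.card_image_of_injective {j | r < j ∧ j < t ∧ w r < w j}
    (f := fun j : Fin n => (s, j, t)) (fun a b h => by simpa using h)]
  refine (Finset.card_le_card ?_).trans (Finset.card_insert_le (s, s, t) _)
  rw [Finset.image_subset_iff]
  intro j hj
  have := hfirst j
  have := hleast j
  have : w j = w t ↔ j = t := w.injective.eq_iff
  simp only [Finset.mem_filter, Finset.mem_univ, true_and, Finset.mem_insert,
    Prod.mk.injEq, Equiv.Perm.mul_apply, swap_apply_def] at hj ⊢
  grind

theorem n132_add_one_le_sum_isBruhatCover (hr : ¬IsRightToLeftMax w r)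
    (hmax : ∀ a < r, IsRightToLeftMax w a) :
    n132 n w + 1 ≤ ∑ j with IsBruhatCover w r j, (n132 n (w * swap r j) + 1) := by
  obtain ⟨s, hrs, hws, hfirst⟩ := exists_first_later_larger hr
  obtain ⟨t, hrt, hwt, hleast⟩ := exists_least_larger hr hmax
  have hs : IsBruhatCover w r s :=
    ⟨hrs, hws, fun p hp hps hwp => (hfirst p hp hwp.1).not_gt hps⟩
  have ht : IsBruhatCover w r t :=
    ⟨hrt, hwt, fun p _ _ hwp => (hleast p hwp.1).not_gt hwp.2⟩
  have hstep := n132_le_n132_mul_swap_add hrt hwt hleast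
  rcases (hfirst t hrt hwt).eq_or_lt with rfl | hst
  · have hnone : Finset.card {j | r < j ∧ j < s ∧ w r < w j} = 0 := by
      rw [Finset.card_eq_zero, Finset.filter_eq_empty_iff]
      exact fun j _ ⟨hrj, hjs, hwj⟩ => (hfirst j hrj hwj).not_gt hjs
    calc n132 n w + 1 ≤ n132 n (w * swap r s) + 1 := by omega
      _ ≤ ∑ j with IsBruhatCover w r j, (n132 n (w * swap r j) + 1) :=
        Finset.single_le_sum (f := fun j => n132 n (w * swap r j) + 1) (fun _ _ => Nat.zero_le _)
          (by simpa using hs)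
  · have hlater := card_later_larger_le hfirst hwt hleast
    calc n132 n w + 1 ≤ ∑ j ∈ {s, t}, (n132 n (w * swap r j) + 1) := by
          rw [Finset.sum_pair hst.ne]; omega
      _ ≤ ∑ j with IsBruhatCover w r j, (n132 n (w * swap r j) + 1) :=
        Finset.sum_le_sum_of_subset (by simp [Finset.insert_subset_iff, hs, ht])

end Counting

section Polynomials

variable {σ R : Type*} [CommRing R]

theorem X_sub_X_ne_zero [Nontrivial R] {i j : σ} (hij : i ≠ j) :
    (X i - X j : MvPolynomial σ R) ≠ 0 :=
  sub_ne_zero.2 (X_injective.ne hij)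

theorem one_le_degreeOf_X_sub_X [Nontrivial R] {i j : σ} (hij : i ≠ j) :
    1 ≤ degreeOf j (X i - X j : MvPolynomial σ R) := by
  have h := degreeOf_sub_le j (X i : MvPolynomial σ R) (X i - X j)
  rwa [sub_sub_cancel, degreeOf_X_self, degreeOf_X_of_ne hij.symm, Nat.zero_max] at h

attribute [local instance] MvPolynomial.gradedAlgebra in
theorem homogeneousComponent_add_mul {p : MvPolynomial σ R} {a : ℕ} (hp : p.IsHomogeneous a)
    (q : MvPolynomial σ R) (b : ℕ) :
    homogeneousComponent (a + b) (p * q) = p * homogeneousComponent b q := by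
  simpa only [DirectSum.decompose, Equiv.coe_fn_mk, ← decomposition.decompose'_apply] using
    DirectSum.coe_decompose_mul_add_of_left_mem (homogeneousSubmodule σ R) (b := q) (j := b) hp

theorem isHomogeneous_of_mul [NoZeroDivisors R] {p q : MvPolynomial σ R} {a b : ℕ}
    (hp : p.IsHomogeneous a) (hp0 : p ≠ 0) (hpq : (p * q).IsHomogeneous (a + b)) :
    q.IsHomogeneous b := by
  have hcomp : homogeneousComponent b q = q := mul_left_cancel₀ hp0 <| by
    rw [← homogeneousComponent_add_mul hp, homogeneousComponent_eq_self hpq]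
  exact hcomp ▸ homogeneousComponent_isHomogeneous b q

theorem isSymmetric_of_rename_swap_covBy {n : ℕ} {F : MvPolynomial (Fin n) R}
    (hF : ∀ k k', k ⋖ k' → rename (swap k k') F = F) : F.IsSymmetric := by
  cases n with
  | zero => exact fun e => by rw [Subsingleton.elim e 1, Equiv.Perm.coe_one, rename_id_apply]
  | succ n =>
    intro e
    have he : e ∈ Submonoid.closure (Set.range fun i : Fin n => swap i.castSucc i.succ) :=
      Equiv.Perm.mclosure_swap_castSucc_succ n ▸ Submonoid.mem_top e
    induction he using Submonoid.closure_induction with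
    | mem _ h => obtain ⟨i, rfl⟩ := h; exact hF _ _ (by simp [Fin.covBy_iff])
    | one => rw [Equiv.Perm.coe_one, rename_id_apply]
    | mul e f _ _ he hf => rw [Equiv.Perm.coe_mul, ← rename_rename, hf, he]

theorem eq_C_of_isSymmetric_of_degreeOf_eq_zero {F : MvPolynomial σ R} (hF : F.IsSymmetric)
    {l : σ} (hl : degreeOf l F = 0) : F = C (constantCoeff F) := by
  classical
  refine vars_eq_empty_iff_eq_C.1 (Finset.eq_empty_of_forall_notMem fun i hi => ?_)
  have h := degreeOf_rename_of_injective (p := F) (swap i l).injective i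
  rw [hF, swap_apply_left, hl] at h
  exact mem_vars_iff_degreeOf_ne_zero.1 hi h.symm

variable [DecidableEq σ]

/-- `q` is the divided difference `∂ p = (p - s p) / (x_i - x_j)`, where `s` exchanges `x_i` and
`x_j`; the quotient is encoded by clearing the denominator. -/
def IsDividedDifference (i j : σ) (p q : MvPolynomial σ R) : Prop :=
  (X i - X j) * q = p - rename (swap i j) p

namespace IsDividedDifference

variable {i j : σ} {p q p' q' : MvPolynomial σ R}

theorem rename_eq (h : IsDividedDifference i j p 0) : rename (swap i j) p = p := by
  rw [IsDividedDifference, mul_zero] at h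
  exact (sub_eq_zero.1 h.symm).symm

theorem sub (h : IsDividedDifference i j p q) (h' : IsDividedDifference i j p' q') :
    IsDividedDifference i j (p - p') (q - q') := by
  unfold IsDividedDifference at *
  rw [map_sub]
  linear_combination h - h'

theorem sum_zsmul {ι : Type*} {s : Finset ι} (c : ι → ℤ) {f g : ι → MvPolynomial σ R}
    (h : ∀ a, IsDividedDifference i j (f a) (g a)) :
    IsDividedDifference i j (∑ a ∈ s, c a • f a) (∑ a ∈ s, c a • g a) := by
  unfold IsDividedDifference at *
  simp only [map_sum, map_zsmul, Finset.mul_sum, mul_smul_comm, h, smul_sub,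
    Finset.sum_sub_distrib]

-- The twisted Leibniz rule `∂ (f p) = (∂ f) p + (s f) (∂ p)` for a variable `f`.
theorem X_mul (h : IsDividedDifference i j p q) (r : σ) :
    IsDividedDifference i j (X r * p) (divDiffVar i j r • p + X (swap i j r) * q) := by
  have hvar : (X i - X j) * (divDiffVar i j r : MvPolynomial σ R) = X r - X (swap i j r) := by
    rw [swap_apply_def, divDiffVar]
    split_ifs with hi hj
    · simp [hi]
    · simp [hj]
    · simp
  unfold IsDividedDifference at *
  rw [map_mul, rename_X, zsmul_eq_mul]
  linear_combination p * hvar + X (swap i j r) * h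

variable [IsDomain R]

theorem isHomogeneous (h : IsDividedDifference i j p q) (hij : i ≠ j) {d : ℕ}
    (hp : p.IsHomogeneous (d + 1)) : q.IsHomogeneous d := by
  refine isHomogeneous_of_mul ((isHomogeneous_X R i).sub (isHomogeneous_X R j))
    (X_sub_X_ne_zero hij) ?_
  rw [h, add_comm]
  exact hp.sub hp.rename_isHomogeneous

theorem isDividedDifference_zero (h : IsDividedDifference i j p q) (hij : i ≠ j) :
    IsDividedDifference i j q 0 := by
  have hswap : (X j - X i) * rename (swap i j) q = rename (swap i j) p - p := by
    simpa [rename_rename, ← Equiv.Perm.coe_mul] using congrArg (rename (swap i j)) h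
  have hsymm : q = rename (swap i j) q := mul_left_cancel₀ (X_sub_X_ne_zero hij) <| by
    unfold IsDividedDifference at h
    linear_combination h + hswap
  rw [IsDividedDifference, mul_zero, ← hsymm, sub_self]

theorem degreeOf_add_degreeOf_le (h : IsDividedDifference i j p q) (hij : i ≠ j) (hq : q ≠ 0)
    (l : σ) : degreeOf l (X i - X j : MvPolynomial σ R) + degreeOf l q ≤
      max (degreeOf l p) (degreeOf (swap i j l) p) := by
  have hrename := degreeOf_rename_of_injective (p := p) (swap i j).injective (swap i j l)
  rw [swap_apply_self] at hrename
  rw [← degreeOf_mul_eq (X_sub_X_ne_zero hij) hq, h, ← hrename]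
  exact degreeOf_sub_le l _ _

end IsDividedDifference

theorem IsDividedDifference.degreeOf_le_sub [IsDomain R] {n : ℕ} {p q : MvPolynomial (Fin n) R}
    {k k' : Fin n} (h : IsDividedDifference k k' p q) (hk : k ⋖ k')
    (hp : ∀ l, degreeOf l p ≤ n - 1 - (l : ℕ)) (l : Fin n) : degreeOf l q ≤ n - 1 - (l : ℕ) := by
  rcases eq_or_ne q 0 with rfl | hq
  · simp
  have hdeg := h.degreeOf_add_degreeOf_le hk.ne hq l
  have hl := hp l
  rcases eq_or_ne l k' with rfl | hlk'
  · have hone := one_le_degreeOf_X_sub_X (R := R) hk.ne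
    have hprev := hp k
    have hval : (k : ℕ) + 1 = l := Order.covBy_iff_add_one_eq.1 (Fin.covBy_iff.1 hk)
    rw [swap_apply_right] at hdeg
    omega
  · have hswap : (l : ℕ) ≤ swap k k' l := by
      have := hk.le
      grind
    have := hp (swap k k' l)
    omega

end Polynomials

section Schubert

variable {n : ℕ} {R : Type*} [CommRing R]

/-- The family `w ↦ S w` of Schubert polynomials of `S_n`, with `0`-indexed variables and
coefficients in `R`. -/
structure IsSchubertFamily (S : Perm (Fin n) → MvPolynomial (Fin n) R) : Prop where
  revPerm : S Fin.revPerm = ∏ i : Fin n, X i ^ (n - 1 - (i : ℕ))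
  dividedDifference : ∀ w k k', k ⋖ k' → w k < w k' →
    IsDividedDifference k k' (S (w * swap k k')) (S w)

theorem perm_induction_of_covBy_ascent {P : Perm (Fin n) → Prop} (rev : P Fin.revPerm)
    (step : ∀ w k k', k ⋖ k' → w k < w k' → P (w * swap k k') → P w) (w : Perm (Fin n)) : P w := by
  induction w using perm_induction_of_swap_ascent with
  | ih w ih =>
    rcases eq_or_ne w Fin.revPerm with rfl | hw
    · exact rev
    · obtain ⟨k, k', hk, h⟩ := exists_covBy_ascent hw
      exact step w k k' hk h (ih k k' hk.lt h)

namespace IsSchubertFamily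

variable [IsDomain R] {S : Perm (Fin n) → MvPolynomial (Fin n) R} {v w : Perm (Fin n)}

theorem isHomogeneous (hS : IsSchubertFamily S) (w : Perm (Fin n)) :
    (S w).IsHomogeneous (inversions w).card := by
  induction w using perm_induction_of_covBy_ascent with
  | rev =>
    rw [hS.revPerm, card_inversions_revPerm]
    exact IsHomogeneous.prod _ _ _ fun i _ => isHomogeneous_X_pow i _
  | step w k k' hk h ih =>
    rw [card_inversions_mul_swap hk h] at ih
    exact (hS.dividedDifference w k k' hk h).isHomogeneous hk.ne ih

theorem constantCoeff_mul_swap (hS : IsSchubertFamily S) {a b : Fin n} (hab : a < b)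
    (h : w a < w b) : constantCoeff (S (w * swap a b)) = 0 :=
  (hS.isHomogeneous _).coeff_eq_zero <| by
    simpa using (card_inversions_pos hab (by simpa using h)).ne

theorem degreeOf_le (hS : IsSchubertFamily S) (w : Perm (Fin n)) (l : Fin n) :
    degreeOf l (S w) ≤ n - 1 - (l : ℕ) := by
  induction w using perm_induction_of_covBy_ascent generalizing l with
  | rev =>
    rw [hS.revPerm]
    refine (degreeOf_prod_le _ _ _).trans ?_
    rw [Finset.sum_eq_single l (fun i _ hi => degreeOf_X_pow_of_ne _ hi.symm) (by simp),
      degreeOf_X_self_pow]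
  | step w k k' hk h ih => exact (hS.dividedDifference w k k' hk h).degreeOf_le_sub hk ih l

theorem isDividedDifference_divDiffIndex (hS : IsSchubertFamily S) {k k' : Fin n} (hk : k ⋖ k')
    (v : Perm (Fin n)) : IsDividedDifference k k' (S v) (divDiffIndex S k k' v) := by
  unfold divDiffIndex
  split_ifs with hv
  · simpa using hS.dividedDifference (v * swap k k') k k' hk (by simpa using hv)
  · have hasc : v k < v k' := (not_lt.1 hv).lt_of_ne (v.injective.ne hk.ne)
    exact (hS.dividedDifference v k k' hk hasc).isDividedDifference_zero hk.ne

theorem isDividedDifference_X_mul_sub_monkSum (hS : IsSchubertFamily S) {k k' : Fin n}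
    (hk : k ⋖ k') (v : Perm (Fin n)) (r : Fin n) :
    IsDividedDifference k k' (X r * S v - monkSum S v r)
      (divDiffVar k k' r • S v + X (swap k k' r) * divDiffIndex S k k' v -
        monkSum (divDiffIndex S k k') v r) :=
  ((hS.isDividedDifference_divDiffIndex hk v).X_mul r).sub <|
    IsDividedDifference.sum_zsmul _ fun _ => hS.isDividedDifference_divDiffIndex hk _

theorem constantCoeff_monkSum (hS : IsSchubertFamily S) (v : Perm (Fin n)) (r : Fin n) :
    constantCoeff (monkSum S v r) = 0 := by
  rw [monkSum, map_sum]
  refine Finset.sum_eq_zero fun j _ => ?_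
  rw [map_zsmul]
  by_cases hrj : IsBruhatCover v r j
  · rw [hS.constantCoeff_mul_swap hrj.1 hrj.2.1, smul_zero]
  by_cases hjr : IsBruhatCover v j r
  · rw [Equiv.swap_comm, hS.constantCoeff_mul_swap hjr.1 hjr.2.1, smul_zero]
  · simp [monkCoeff, hrj, hjr]

theorem degreeOf_last_X_mul_sub_monkSum (hS : IsSchubertFamily S) (v : Perm (Fin n)) {r l : Fin n}
    (hr : r < l) (hl : (l : ℕ) = n - 1) : degreeOf l (X r * S v - monkSum S v r) = 0 := by
  have hdeg (u : Perm (Fin n)) : degreeOf l (S u) = 0 :=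
    Nat.le_zero.1 ((hS.degreeOf_le u l).trans_eq (by omega))
  refine Nat.le_zero.1 ((degreeOf_sub_le _ _ _).trans (max_le ?_ ?_))
  · refine (degreeOf_mul_le _ _ _).trans_eq ?_
    rw [hdeg, degreeOf_X_of_ne hr.ne']
  · refine (degreeOf_sum_le _ _ _).trans (Finset.sup_le fun j _ => ?_)
    rw [zsmul_eq_mul, ← map_intCast (C : R →+* MvPolynomial (Fin n) R)]
    exact (degreeOf_C_mul_le _ _ _).trans_eq (hdeg _)

theorem X_mul_eq_monkSum (hS : IsSchubertFamily S) {r : Fin n} (hr : ¬IsRightToLeftMax v r) :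
    X r * S v = monkSum S v r := by
  induction v using perm_induction_of_swap_descent generalizing r with
  | ih v ih =>
    have hsymm : (X r * S v - monkSum S v r).IsSymmetric := by
      refine isSymmetric_of_rename_swap_covBy fun k k' hk => IsDividedDifference.rename_eq ?_
      have hdd := hS.isDividedDifference_X_mul_sub_monkSum hk v r
      rcases (v.injective.ne hk.ne).lt_or_gt with hv | hv
      · rwa [monkSum_divDiffIndex_of_ascent S hk hv, divDiffIndex, if_neg hv.not_gt, mul_zero,
          add_zero, sub_self] at hdd
      · rwa [monkSum_divDiffIndex_of_descent S hk hv, divDiffIndex, if_pos hv,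
          ih k k' hk.lt hv (not_isRightToLeftMax_mul_swap hk hv hr), sub_self] at hdd
    obtain ⟨j, hrj, -⟩ : ∃ j, r < j ∧ v r < v j := by simpa [IsRightToLeftMax] using hr
    have hconst := eq_C_of_isSymmetric_of_degreeOf_eq_zero hsymm
      (hS.degreeOf_last_X_mul_sub_monkSum v (l := ⟨n - 1, by omega⟩) (by grind) rfl)
    rw [map_sub, hS.constantCoeff_monkSum, map_mul, constantCoeff_X, zero_mul, sub_zero,
      C_0] at hconst
    exact sub_eq_zero.1 hconst

theorem X_mul_eq_sum_isBruhatCover (hS : IsSchubertFamily S) {r : Fin n}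
    (hr : ¬IsRightToLeftMax w r) (hmax : ∀ a < r, IsRightToLeftMax w a) :
    X r * S w = ∑ j with IsBruhatCover w r j, S (w * swap r j) := by
  have hnone (j : Fin n) : ¬IsBruhatCover w j r := fun h => (hmax j h.1 r h.1).not_gt h.2.1
  rw [hS.X_mul_eq_monkSum hr, monkSum, Finset.sum_filter]
  exact Finset.sum_congr rfl fun j _ => by simp [monkCoeff, hnone]

end IsSchubertFamily

theorem schubert_eval_one_ge_n132_general [LinearOrder R] [IsStrictOrderedRing R]
    {S : Perm (Fin n) → MvPolynomial (Fin n) R} (hS : IsSchubertFamily S) (w : Perm (Fin n)) :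
    (n132 n w : R) + 1 ≤ eval (fun _ => (1 : R)) (S w) := by
  induction w using perm_induction_of_swap_ascent with
  | ih w ih =>
    rcases eq_or_ne w Fin.revPerm with rfl | hw
    · simp [n132_revPerm, hS.revPerm]
    obtain ⟨r, hr, hmax⟩ := exists_first_not_isRightToLeftMax hw
    calc (n132 n w : R) + 1 ≤ ∑ j with IsBruhatCover w r j, ((n132 n (w * swap r j) : R) + 1) :=
          mod_cast n132_add_one_le_sum_isBruhatCover hr hmax
      _ ≤ ∑ j with IsBruhatCover w r j, eval (fun _ => (1 : R)) (S (w * swap r j)) := by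
          refine Finset.sum_le_sum fun j hj => ?_
          have hrj : IsBruhatCover w r j := (Finset.mem_filter.1 hj).2
          exact ih r j hrj.1 hrj.2.1
      _ = eval (fun _ => (1 : R)) (S w) := by
          rw [← map_sum, ← hS.X_mul_eq_sum_isBruhatCover hr hmax, map_mul, eval_X, one_mul]

end Schubert

/-- Suppose `S` is the family of Schubert polynomials of `S_n`, i.e.
`S w₀ = x₀^{n-1} x₁^{n-2} ⋯` for the longest element `w₀` (here `0`-indexed), and
whenever `w i < w (i+1)` we have `(x_i - x_{i+1}) · S w = S (w s_i) - s_i (S (w s_i))`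
(the divided-difference recurrence `S w = ∂_i S_{w s_i}`).  Then for every `w`,
`S_w(1,…,1) ≥ n₁₃₂(w) + 1`. -/
theorem schubert_eval_one_ge_n132 (n : ℕ)
    (S : Equiv.Perm (Fin n) → MvPolynomial (Fin n) ℚ)
    (hlong : S Fin.revPerm = ∏ i : Fin n, X i ^ (n - 1 - (i : ℕ)))
    (hrec : ∀ (w : Equiv.Perm (Fin n)) (i : ℕ) (h : i + 1 < n),
      w ⟨i, by omega⟩ < w ⟨i + 1, h⟩ →
        (X (⟨i, by omega⟩ : Fin n) - X ⟨i + 1, h⟩) * S w =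
          S (w * Equiv.swap ⟨i, by omega⟩ ⟨i + 1, h⟩) -
            rename (Equiv.swap (⟨i, by omega⟩ : Fin n) ⟨i + 1, h⟩)
              (S (w * Equiv.swap ⟨i, by omega⟩ ⟨i + 1, h⟩))) :
    ∀ w : Equiv.Perm (Fin n), (n132 n w : ℚ) + 1 ≤ eval (fun _ => (1 : ℚ)) (S w) := by
  refine schubert_eval_one_ge_n132_general ⟨hlong, ?_⟩
  rintro w k ⟨_, hk'⟩ hk h
  obtain rfl := Order.covBy_iff_add_one_eq.1 (Fin.covBy_iff.1 hk)
  exact hrec w k hk' h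

end Schub
end

section
/- Let w ∈ S_n be a grassmannian permutation corresponding to the partition λ (so w = w_λ with w_λ(i) = i + λ_{L−i+1} for i ≤ L, one descent at L). Then the coefficient of x^α in the Schubert polynomial S_{w_λ} equals the Kostka number K_{λ,α}, the number of semistandard Young tableaux of shape λ and content α. -/
/-!
If the Lehmer code `c` of a permutation `u` is weakly decreasing, then `S u = x ^ c`, as one sees
by descending from the longest element along divided differences, each of which lowers one
exponent by one. Let `w` be grassmannian with descent at `L`. Antisymmetrizing over `S_L` and
telescoping the divided differences that lead from `w` to the permutation with its first `L`
values reversed, one finds that `a_δ S w` is the antisymmetrization of a dominant Schubert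
polynomial, namely of the monomial `x ^ (λ + δ)`. Hence `a_δ S w = a_{λ+δ}`. On the other hand
`a_{λ+δ} = a_δ s_λ`, where `s_λ` is the generating function of tableaux: expanding `a_{λ+δ} / a_δ`
by the last variable gives a sum over the partitions interlacing `λ`, which are the shapes left
when the largest entries are removed from the tableaux of shape `λ`. The alternant `a_δ` is not a
zero divisor, so `S w = s_λ`.
-/

namespace Schub

open MvPolynomial

/-- `(i,j)` (1-based) is a box of the Young diagram of the partition `λ` with at
most `L` parts. -/
def InShape (L : ℕ) (lam : ℕ → ℕ) (b : ℕ × ℕ) : Prop :=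
  1 ≤ b.1 ∧ b.1 ≤ L ∧ 1 ≤ b.2 ∧ b.2 ≤ lam b.1

/-- `T` is a semistandard Young tableau of shape `λ` (at most `L` parts, entries in
`[L]`, rows weakly increasing, columns strictly increasing) with content `α`,
where the entry `k+1` is counted by `α k` for `k : Fin n`. -/
def IsSSYT (n L : ℕ) (lam : ℕ → ℕ) (α : Fin n → ℕ) (T : ℕ × ℕ → ℕ) : Prop :=
  (∀ b, ¬ InShape L lam b → T b = 0) ∧
  (∀ b, InShape L lam b → 1 ≤ T b ∧ T b ≤ L) ∧
  (∀ i j j', InShape L lam (i, j) → InShape L lam (i, j') → j ≤ j' → T (i, j) ≤ T (i, j')) ∧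
  (∀ i i' j, InShape L lam (i, j) → InShape L lam (i', j) → i < i' → T (i, j) < T (i', j)) ∧
  (∀ k : Fin n, {b | InShape L lam b ∧ T b = (k : ℕ) + 1}.ncard = α k)

/-! ### Lehmer codes -/

section LehmerCode

variable {α : Type*} [LinearOrder α] [Fintype α]

/-- The Lehmer code of a permutation: `code f i` counts the inversions `i < j`, `f j < f i`. -/
def code (f : Equiv.Perm α) (i : α) : ℕ :=
  (Finset.univ.filter fun j => i < j ∧ f j < f i).card

lemma code_eq_add_of_covBy (f : Equiv.Perm α) {a b : α} (hab : a ⋖ b) :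
    code f a = (if f b < f a then 1 else 0) +
      (Finset.univ.filter fun j => b < j ∧ f j < f a).card := by
  have hsplit (j : α) : a < j ∧ f j < f a ↔ (j = b ∧ f b < f a) ∨ (b < j ∧ f j < f a) := by
    rw [hab.lt_iff_le_right, le_iff_eq_or_lt]
    grind
  split_ifs with hf
  · rw [add_comm, ← Finset.card_insert_of_notMem (a := b) (by simp)]
    exact congrArg Finset.card (by ext j; simp [hsplit, hf])
  · simp [code, hsplit, hf]

lemma code_lt_code_iff_of_covBy (f : Equiv.Perm α) {a b : α} (hab : a ⋖ b) :
    code f b < code f a ↔ f b < f a := by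
  rw [code_eq_add_of_covBy f hab, code]
  rcases lt_or_gt_of_ne (f.injective.ne hab.ne) with hf | hf
  · simp only [hf.not_gt, if_false, iff_false, not_lt, zero_add]
    gcongr
  · simp only [hf, if_true, iff_true, Nat.lt_one_add_iff]
    gcongr

lemma strictAnti_code_iff [LocallyFiniteOrder α] (f : Equiv.Perm α) :
    StrictAnti (code f) ↔ StrictAnti f := by
  simp +contextual only [strictAnti_iff_forall_covBy, code_lt_code_iff_of_covBy]

lemma code_mul_swap_of_ne (f : Equiv.Perm α) {a b k : α} (hab : a ⋖ b) (ha : k ≠ a) (hb : k ≠ b) :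
    code (f * Equiv.swap a b) k = code f k := by
  have hlt : k < a ↔ k < b := by rw [hab.lt_iff_le_left, le_iff_lt_or_eq, or_iff_left ha]
  refine Finset.card_equiv (Equiv.swap a b) fun j => ?_
  have hswap : k < Equiv.swap a b j ↔ k < j := by
    rw [Equiv.swap_apply_def]
    split_ifs with h h <;> simp [h, hlt]
  simp [hswap, Equiv.swap_apply_of_ne_of_ne ha hb]

lemma code_mul_swap (f : Equiv.Perm α) {a b : α} (hab : a ⋖ b) (hf : f a < f b)
    (hcode : code f a = code f b) :
    code (f * Equiv.swap a b) = code f + Pi.single a 1 := by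
  have hswap (c : α) : (Finset.univ.filter fun j => b < j ∧ f (Equiv.swap a b j) < c) =
      Finset.univ.filter fun j => b < j ∧ f j < c :=
    Finset.filter_congr fun j _ => and_congr_right fun hj => by
      rw [Equiv.swap_apply_of_ne_of_ne (hab.lt.trans hj).ne' hj.ne']
  funext k
  rw [Pi.add_apply]
  rcases eq_or_ne k a with rfl | ha
  · rw [code_eq_add_of_covBy _ hab, hcode, code]
    simp [hf, hswap, add_comm]
  rcases eq_or_ne k b with rfl | hb
  · rw [← hcode, code_eq_add_of_covBy _ hab, code]
    simp [hf.not_gt, hswap, ha]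
  · simp [code_mul_swap_of_ne f hab ha hb, ha]

lemma sum_code_le (f : Equiv.Perm α) : ∑ i, code f i ≤ Fintype.card α * Fintype.card α := by
  simpa using Finset.sum_le_card_nsmul Finset.univ (code f) _ fun _ _ => Finset.card_le_univ _

lemma code_eq_zero {f : Equiv.Perm α} {i : α} (h : ∀ j, i < j → f i < f j) : code f i = 0 :=
  Finset.card_eq_zero.2 (Finset.filter_eq_empty_iff.2 fun j _ hj => (h j hj.1).asymm hj.2)

lemma code_one : code (1 : Equiv.Perm α) = 0 :=
  funext fun _ => code_eq_zero fun _ hj => hj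

end LehmerCode

lemma code_eq_apply {n : ℕ} {u : Equiv.Perm (Fin n)} {i : Fin n} (h : ∀ j, u j < u i → i < j) :
    code u i = (u i : ℕ) := by
  rw [← Fin.card_Iio (u i), code]
  refine Finset.card_equiv u fun j => ?_
  simpa using h j

lemma exists_antitone_add_single {α : Type*} [LinearOrder α] [WellFoundedLT α]
    [LocallyFiniteOrder α] {c : α → ℕ} (hc : Antitone c) (hstrict : ¬ StrictAnti c) :
    ∃ a b, a ⋖ b ∧ c a = c b ∧ Antitone (c + Pi.single a 1) := by
  have hex : ∃ a b, a ⋖ b ∧ c a = c b := by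
    rw [strictAnti_iff_forall_covBy] at hstrict
    push Not at hstrict
    obtain ⟨a, b, hab, h⟩ := hstrict
    exact ⟨a, b, hab, h.antisymm (hc hab.le)⟩
  obtain ⟨a, ⟨b, hab, heq⟩, hmin⟩ :=
    WellFounded.has_min (wellFounded_lt (α := α)) {a | ∃ b, a ⋖ b ∧ c a = c b} hex
  refine ⟨a, b, hab, heq, (antitone_iff_forall_covBy _).2 fun i j hij => ?_⟩
  have hle := hc hij.le
  rcases eq_or_ne j a with rfl | hj
  · have hne : c i ≠ c j := fun h => hmin i ⟨j, hij, h⟩ hij.lt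
    have hlt : c j < c i := hle.lt_of_ne hne.symm
    simpa [hij.ne] using hlt
  · simpa [hj] using hle.trans (Nat.le_add_right _ _)

lemma eq_revPerm_of_strictAnti {n : ℕ} {u : Equiv.Perm (Fin n)} (hu : StrictAnti u) :
    u = Fin.revPerm :=
  Equiv.ext fun i => by
    simpa [Fin.rev_eq_iff] using congrFun (Fin.rev_strictAnti.comp hu).eq_id i

lemma code_revPerm {n : ℕ} (i : Fin n) : code Fin.revPerm i = (i.rev : ℕ) := by
  have hset : (Finset.univ.filter fun j => i < j ∧ Fin.revPerm j < Fin.revPerm i) =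
      Finset.Ioi i := by
    ext j; simp
  rw [code, hset, Fin.card_Ioi, Fin.val_rev]
  omega

/-- A permutation is dominant when its Lehmer code is a partition. -/
def IsDominant {n : ℕ} (u : Equiv.Perm (Fin n)) : Prop := Antitone (code u)

theorem IsDominant.induction {n : ℕ} {P : Equiv.Perm (Fin n) → Prop} (longest : P Fin.revPerm)
    (step : ∀ u a b, a ⋖ b → u a < u b → code u a = code u b → P (u * Equiv.swap a b) → P u)
    (u : Equiv.Perm (Fin n)) (hu : IsDominant u) : P u := by
  induction hN : n * n - ∑ i, code u i using Nat.strong_induction_on generalizing u with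
  | _ N ih =>
    by_cases hanti : StrictAnti u
    · exact eq_revPerm_of_strictAnti hanti ▸ longest
    obtain ⟨a, b, hab, hcode, hdom⟩ :=
      exists_antitone_add_single hu (mt (strictAnti_code_iff u).1 hanti)
    have hlt : u a < u b := (u.injective.ne hab.ne).lt_of_le <| not_lt.1 fun h =>
      ((code_lt_code_iff_of_covBy u hab).2 h).ne' hcode
    have hstep := code_mul_swap u hab hlt hcode
    have hsum : ∑ i, code (u * Equiv.swap a b) i = ∑ i, code u i + 1 := by
      simp [hstep, Finset.sum_add_distrib]
    have hbound := sum_code_le (u * Equiv.swap a b)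
    rw [Fintype.card_fin] at hbound
    exact step u a b hab hlt hcode
      (ih _ (by omega) _ (by rwa [IsDominant, hstep]) rfl)

/-! ### Dominant Schubert polynomials -/

section DividedDifference

variable {R : Type*} [CommRing R] {σ τ : Type*}

lemma isRegular_X_sub_X {a b : σ} (h : a ≠ b) : IsRegular (X a - X b : MvPolynomial σ R) := by
  classical
  let shear (c : MvPolynomial σ R) : MvPolynomial σ R →ₐ[R] MvPolynomial σ R :=
    aeval (Function.update X a c)
  have hcomp : (shear (X a - X b)).comp (shear (X a + X b)) = AlgHom.id R _ := by
    refine algHom_ext fun i => ?_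
    rcases eq_or_ne i a with rfl | hi
    · simp [shear, h.symm]
    · simp [shear, hi]
  have hinv : Function.LeftInverse (shear (X a - X b)) (shear (X a + X b)) :=
    DFunLike.congr_fun hcomp
  have hshear : shear (X a + X b) (X a - X b) = X a := by simp [shear, h.symm]
  refine isLeftRegular_iff_isRegular.1 fun p q hpq => hinv.injective ?_
  have hX := congrArg (shear (X a + X b)) hpq
  simp only [map_mul, hshear] at hX
  exact (isRegular_X (n := a)).left hX

lemma rename_swap_prod_X_pow [DecidableEq σ] [Fintype τ] (ι : τ ↪ σ) {a b : τ} {c : τ → ℕ}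
    (hc : c a = c b) :
    rename (Equiv.swap (ι a) (ι b)) (∏ i, X (ι i) ^ c i : MvPolynomial σ R) =
      ∏ i, X (ι i) ^ c i := by
  classical
  simp only [map_prod, map_pow, rename_X, ← ι.injective.map_swap]
  refine Fintype.prod_equiv (Equiv.swap a b) _ _ fun i => ?_
  rw [Equiv.swap_apply_def]
  split_ifs <;> simp_all

lemma prod_X_pow_add_single [Fintype τ] [DecidableEq τ] (ι : τ ↪ σ) (c : τ → ℕ) (a : τ) :
    (∏ i, X (ι i) ^ (c + Pi.single a 1 : τ → ℕ) i : MvPolynomial σ R) =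
      X (ι a) * ∏ i, X (ι i) ^ c i := by
  simp only [Pi.add_apply, pow_add, Finset.prod_mul_distrib, mul_comm (X (ι a)), Pi.single_apply,
    pow_ite, pow_one, pow_zero, Finset.prod_ite_eq', Finset.mem_univ, if_true]

end DividedDifference

section SchubertFamily

variable {R : Type*} [CommRing R] {n : ℕ}

/-- The recursive characterization of the Schubert polynomials of `S_n`, as a family `S` indexed
by permutations. The divided difference `S u = ∂_a (S (u s))`, where `s` exchanges the consecutive
indices `a ⋖ b`, is stated with its denominator cleared. -/
structure IsSchubertFamily_s19 (S : Equiv.Perm (Fin n) → MvPolynomial (Fin n) R) : Prop where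
  longest : S Fin.revPerm = ∏ i : Fin n, X i ^ (n - 1 - (i : ℕ))
  sub_mul {u : Equiv.Perm (Fin n)} {a b : Fin n} (hab : a ⋖ b) (hu : u a < u b) :
    (X a - X b) * S u =
      S (u * Equiv.swap a b) - rename (Equiv.swap a b) (S (u * Equiv.swap a b))

namespace IsSchubertFamily_s19

variable {S : Equiv.Perm (Fin n) → MvPolynomial (Fin n) R}

lemma of_forall_succ (longest : S Fin.revPerm = ∏ i : Fin n, X i ^ (n - 1 - (i : ℕ)))
    (sub_mul : ∀ (u : Equiv.Perm (Fin n)) (i : ℕ) (hi : i < n) (hi' : i + 1 < n),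
      u ⟨i, hi⟩ < u ⟨i + 1, hi'⟩ →
        (X ⟨i, hi⟩ - X ⟨i + 1, hi'⟩) * S u =
          S (u * Equiv.swap ⟨i, hi⟩ ⟨i + 1, hi'⟩) -
            rename (Equiv.swap ⟨i, hi⟩ ⟨i + 1, hi'⟩)
              (S (u * Equiv.swap ⟨i, hi⟩ ⟨i + 1, hi'⟩))) :
    IsSchubertFamily_s19 S := by
  refine ⟨longest, fun {u a b} hab hu => ?_⟩
  obtain ⟨a, ha⟩ := a
  obtain ⟨b, hb⟩ := b
  obtain rfl : a + 1 = b := Nat.covBy_iff_add_one_eq.1 (Fin.covBy_iff.1 hab)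
  exact sub_mul u a ha hb hu

variable (hS : IsSchubertFamily_s19 S)
include hS

lemma rename_swap {u : Equiv.Perm (Fin n)} {a b : Fin n} (hab : a ⋖ b) (hu : u a < u b) :
    rename (Equiv.swap a b) (S u) = S u := by
  have hdiff := hS.sub_mul hab hu
  have hswap := congrArg (rename (Equiv.swap a b)) hdiff
  simp only [map_mul, map_sub, rename_X, Equiv.swap_apply_left, Equiv.swap_apply_right,
    rename_rename, ← Equiv.Perm.coe_mul, Equiv.swap_mul_self, Equiv.Perm.coe_one,
    rename_id_apply] at hswap
  refine (isRegular_X_sub_X hab.ne).left ?_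
  linear_combination (exp := 1) - hswap - hdiff

theorem eq_prod_X_pow_code {u : Equiv.Perm (Fin n)} (hu : IsDominant u) :
    S u = ∏ i, X i ^ code u i := by
  refine IsDominant.induction (P := fun u => S u = ∏ i, X i ^ code u i) ?_
    (fun u a b hab hlt hcode ih => ?_) u hu
  · rw [hS.longest]
    refine Finset.prod_congr rfl fun i _ => ?_
    rw [code_revPerm, Fin.val_rev, Nat.sub_sub, add_comm 1]
  · have hsymm := rename_swap_prod_X_pow (R := R) (.refl _) hcode
    have hmul := prod_X_pow_add_single (R := R) (.refl _) (code u) a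
    simp only [Function.Embedding.refl_apply] at hsymm hmul
    refine (isRegular_X_sub_X hab.ne).left ?_
    beta_reduce
    rw [hS.sub_mul hab hlt, ih, code_mul_swap u hab hlt hcode, hmul, map_mul, hsymm, rename_X,
      Equiv.swap_apply_left, _root_.sub_mul]

end IsSchubertFamily_s19

end SchubertFamily

/-! ### Antisymmetrization -/

section Antisymmetrization

variable {R : Type*} [CommRing R] {σ τ : Type*} [DecidableEq τ]

lemma viaEmbeddingHom_swap [DecidableEq σ] (ι : τ ↪ σ) (a b : τ) :
    Equiv.Perm.viaEmbeddingHom ι (Equiv.swap a b) = Equiv.swap (ι a) (ι b) := by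
  ext x
  rw [Equiv.Perm.viaEmbeddingHom_apply]
  by_cases hx : x ∈ Set.range ι
  · obtain ⟨i, rfl⟩ := hx
    rw [Equiv.Perm.viaEmbedding_apply, ι.injective.map_swap]
  · rw [Equiv.Perm.viaEmbedding_apply_of_notMem _ _ _ hx, Equiv.swap_apply_of_ne_of_ne]
    · exact fun h => hx ⟨a, h.symm⟩
    · exact fun h => hx ⟨b, h.symm⟩

variable [Fintype τ]

/-- The antisymmetrization operator `∑ sign(π) π` over `Perm τ`, acting on polynomials in the
variables `σ` by permutations of the variables through `φ`. -/
noncomputable def antisymm (φ : Equiv.Perm τ →* Equiv.Perm σ) :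
    MvPolynomial σ R →ₗ[R] MvPolynomial σ R :=
  ∑ π : Equiv.Perm τ, (Equiv.Perm.sign π : ℤ) • (rename (φ π)).toLinearMap

lemma antisymm_apply (φ : Equiv.Perm τ →* Equiv.Perm σ) (p : MvPolynomial σ R) :
    antisymm φ p = ∑ π : Equiv.Perm τ, (Equiv.Perm.sign π : ℤ) • rename (φ π) p := by
  simp [antisymm]

lemma antisymm_mul (φ : Equiv.Perm τ →* Equiv.Perm σ) (p : MvPolynomial σ R)
    {q : MvPolynomial σ R} (hq : ∀ π, rename (φ π) q = q) :
    antisymm φ (p * q) = antisymm φ p * q := by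
  simp only [antisymm_apply, map_mul, hq, Finset.sum_mul, smul_mul_assoc]

lemma antisymm_eq_zero (φ : Equiv.Perm τ →* Equiv.Perm σ) {p : MvPolynomial σ R} {a b : τ}
    (hab : a ≠ b) (hp : rename (φ (Equiv.swap a b)) p = p) : antisymm φ p = 0 := by
  rw [antisymm_apply]
  refine Finset.sum_involution (fun π _ => π * Equiv.swap a b) (fun π _ => ?_)
    (fun π _ _ => by simpa using hab) (fun _ _ => Finset.mem_univ _) (fun π _ => by simp)
  rw [map_mul φ, Equiv.Perm.coe_mul, ← rename_rename, hp, map_mul, Equiv.Perm.sign_swap hab]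
  simp

lemma antisymm_mul_X_mul [DecidableEq σ] (ι : τ ↪ σ) {a b : τ} (hab : a ≠ b)
    {p f g : MvPolynomial σ R} (hp : rename (Equiv.swap (ι a) (ι b)) p = p)
    (hg : rename (Equiv.swap (ι a) (ι b)) g = g)
    (hfg : (X (ι a) - X (ι b)) * g = f - rename (Equiv.swap (ι a) (ι b)) f) :
    antisymm (Equiv.Perm.viaEmbeddingHom ι) (p * (X (ι a) * g)) =
      antisymm (Equiv.Perm.viaEmbeddingHom ι) (p * f) := by
  rw [← sub_eq_zero, ← map_sub, ← mul_sub]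
  refine antisymm_eq_zero _ hab ?_
  rw [viaEmbeddingHom_swap, map_mul, hp, map_sub, map_mul, hg, rename_X, Equiv.swap_apply_left]
  linear_combination -p * hfg

lemma antisymm_prod_X_pow (ι : τ ↪ σ) (c : τ → ℕ) :
    antisymm (Equiv.Perm.viaEmbeddingHom ι) (∏ i, X (ι i) ^ c i) =
      (Matrix.of fun i j => (X (ι i) : MvPolynomial σ R) ^ c j).det := by
  simp only [antisymm_apply, Matrix.det_apply, Matrix.of_apply, map_prod, map_pow, rename_X,
    Equiv.Perm.viaEmbeddingHom_apply, Equiv.Perm.viaEmbedding_apply, Units.smul_def]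

end Antisymmetrization

lemma rename_eq_self_of_covBy {R σ : Type*} [CommSemiring R] {L : ℕ}
    (φ : Equiv.Perm (Fin L) →* Equiv.Perm σ) {p : MvPolynomial σ R}
    (hp : ∀ a b, a ⋖ b → rename (φ (Equiv.swap a b)) p = p) (π : Equiv.Perm (Fin L)) :
    rename (φ π) p = p := by
  obtain _ | L := L
  · rw [Subsingleton.elim π 1, map_one, Equiv.Perm.coe_one, rename_id_apply]
  have hπ : π ∈ Submonoid.closure
      (Set.range fun i : Fin L => Equiv.swap i.castSucc i.succ) := by
    rw [Equiv.Perm.mclosure_swap_castSucc_succ]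
    trivial
  induction hπ using Submonoid.closure_induction with
  | mem _ h =>
    obtain ⟨i, rfl⟩ := h
    exact hp _ _ (Fin.covBy_iff.2 (by simp))
  | one => rw [map_one, Equiv.Perm.coe_one, rename_id_apply]
  | mul π₁ π₂ _ _ h₁ h₂ => rw [map_mul, Equiv.Perm.coe_mul, ← rename_rename, h₂, h₁]

namespace IsSchubertFamily_s19

variable {R : Type*} [CommRing R] {n L : ℕ} {S : Equiv.Perm (Fin n) → MvPolynomial (Fin n) R}
  (hS : IsSchubertFamily_s19 S) {ι : Fin L ↪ Fin n} (hι : ∀ a b, a ⋖ b → ι a ⋖ ι b)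
  {w : Equiv.Perm (Fin n)} (hw : StrictMono fun i => w (ι i))
include hS hι hw

lemma rename_viaEmbeddingHom (π : Equiv.Perm (Fin L)) :
    rename (Equiv.Perm.viaEmbeddingHom ι π) (S w) = S w :=
  rename_eq_self_of_covBy _ (fun a b hab => by
    rw [viaEmbeddingHom_swap]
    exact hS.rename_swap (hι a b hab) (hw hab.lt)) π

lemma antisymm_prod_X_pow_code_mul {u : Equiv.Perm (Fin L)} (hu : IsDominant u) :
    antisymm (Equiv.Perm.viaEmbeddingHom ι)
        ((∏ i, X (ι i) ^ code u i) * S (w * Equiv.Perm.viaEmbeddingHom ι (Fin.revPerm * u))) =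
      antisymm (Equiv.Perm.viaEmbeddingHom ι) ((∏ i, X (ι i) ^ (i.rev : ℕ)) * S w) := by
  set φ := Equiv.Perm.viaEmbeddingHom ι
  refine IsDominant.induction (P := fun u => antisymm φ ((∏ i, X (ι i) ^ code u i) *
    S (w * φ (Fin.revPerm * u))) = antisymm φ ((∏ i, X (ι i) ^ (i.rev : ℕ)) * S w)) ?_
    (fun u a b hab hlt hcode ih => ?_) u hu
  · have hrev : (Fin.revPerm * Fin.revPerm : Equiv.Perm (Fin L)) = 1 := by ext; simp
    simp only [code_revPerm, hrev, map_one, mul_one]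
  · set v := w * φ (Fin.revPerm * (u * Equiv.swap a b)) with hv
    have hvw : v * Equiv.swap (ι a) (ι b) = w * φ (Fin.revPerm * u) := by
      rw [hv, ← viaEmbeddingHom_swap, mul_assoc, ← map_mul φ]
      simp only [mul_assoc, Equiv.swap_mul_self, mul_one]
    have hasc : v (ι a) < v (ι b) := by
      simp only [hv, φ, Equiv.Perm.viaEmbeddingHom_apply, Equiv.Perm.mul_apply,
        Equiv.Perm.viaEmbedding_apply, Equiv.swap_apply_left, Equiv.swap_apply_right]
      exact hw (Fin.rev_lt_rev.2 hlt)
    have hdiff := hS.sub_mul (hι a b hab) hasc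
    rw [hvw] at hdiff
    rw [code_mul_swap u hab hlt hcode, prod_X_pow_add_single, mul_comm (X (ι a)), mul_assoc] at ih
    rw [← ih, antisymm_mul_X_mul ι hab.ne (rename_swap_prod_X_pow ι hcode)
      (hS.rename_swap (hι a b hab) hasc) hdiff]

lemma antisymm_apply_mul_revPerm :
    antisymm (Equiv.Perm.viaEmbeddingHom ι) (S (w * Equiv.Perm.viaEmbeddingHom ι Fin.revPerm)) =
      antisymm (Equiv.Perm.viaEmbeddingHom ι) (∏ i, X (ι i) ^ (i.rev : ℕ)) * S w := by
  have hone : IsDominant (1 : Equiv.Perm (Fin L)) := by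
    rw [IsDominant, code_one]
    exact antitone_const
  have hchain := hS.antisymm_prod_X_pow_code_mul hι hw hone
  simpa [code_one, antisymm_mul _ _ (hS.rename_viaEmbeddingHom hι hw)] using hchain

end IsSchubertFamily_s19

/-! ### Alternants -/

section Determinants

variable {R : Type*} [CommRing R]

lemma det_eq_of_forall_col_eq_smul_add_succ {n : ℕ} {A B : Matrix (Fin (n + 1)) (Fin (n + 1)) R}
    (c : Fin n → R) (hlast : ∀ i, A i (Fin.last n) = B i (Fin.last n))
    (hsucc : ∀ i j, A i j.castSucc = B i j.castSucc + c j * A i j.succ) : A.det = B.det := by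
  rw [← Matrix.det_submatrix_equiv_self Fin.revPerm A,
    ← Matrix.det_submatrix_equiv_self Fin.revPerm B]
  refine Matrix.det_eq_of_forall_col_eq_smul_add_pred (fun j => c j.rev) (fun i => ?_)
    fun i j => ?_
  · simpa using hlast i.rev
  · simpa [Fin.rev_succ, Fin.rev_castSucc] using hsucc i.rev j.rev

lemma det_sum_col {ι κ : Type*} [Fintype ι] [DecidableEq ι] (s : ι → Finset κ)
    (f : ι → κ → ι → R) :
    (Matrix.of fun i j => ∑ k ∈ s j, f j k i).det =
      ∑ p ∈ Fintype.piFinset s, (Matrix.of fun i j => f j (p j) i).det := by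
  have hrows := (Matrix.detRowAlternating (R := R) (n := ι)).toMultilinearMap.map_sum_finset f s
  simp only [← Matrix.det_transpose (Matrix.of _)]
  convert hrows using 1
  · exact congrArg Matrix.det (by ext j i; simp [Finset.sum_apply])
  · rfl

lemma det_eq_mul_det_of_last_row {n : ℕ} (A : Matrix (Fin (n + 1)) (Fin (n + 1)) R)
    (hA : ∀ j : Fin n, A (Fin.last n) j.castSucc = 0) :
    A.det = A (Fin.last n) (Fin.last n) * (A.submatrix Fin.castSucc Fin.castSucc).det := by
  rw [Matrix.det_succ_row A (Fin.last n), Fin.sum_univ_castSucc]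
  simp [hA, ← two_mul, pow_mul, Fin.succAbove_last]

lemma pow_sub_pow_mul_pow {a b : ℕ} (hab : a ≤ b) (d : ℕ) (x t : R) :
    x ^ (b + (d + 1)) - t ^ (b + 1 - a) * x ^ (a + d) =
      (x - t) * ∑ k ∈ Finset.Icc a b, t ^ (b - k) * x ^ (k + d) := by
  have hgeom := mul_geom_sum₂_Ico x t (Nat.le_succ_of_le hab)
  rw [Nat.succ_eq_add_one, Finset.Ico_add_one_right_eq_Icc, Nat.add_sub_cancel] at hgeom
  calc _ = x ^ d * (x ^ (b + 1) - x ^ a * t ^ (b + 1 - a)) := by ring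
    _ = _ := by
      rw [← hgeom, mul_left_comm, Finset.mul_sum]
      congr 1
      exact Finset.sum_congr rfl fun k _ => by ring

end Determinants

section Interlacing

/-- The size of the partition with parts `lam 1, …, lam L`. -/
def size (L : ℕ) (lam : ℕ → ℕ) : ℕ := ∑ k ∈ Finset.range L, lam (k + 1)

/-- The 1-based sequence with parts `p 0, …, p (L - 1)`, extended by zero. -/
def ofParts {L : ℕ} (p : Fin L → ℕ) (k : ℕ) : ℕ :=
  if h : 1 ≤ k ∧ k ≤ L then p ⟨k - 1, by omega⟩ else 0

lemma ofParts_succ {L : ℕ} (p : Fin L → ℕ) (i : Fin L) : ofParts p (i + 1) = p i := by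
  simp [ofParts]

lemma ofParts_injective (L : ℕ) : Function.Injective (ofParts (L := L)) := fun p q h =>
  funext fun i => by simpa only [ofParts_succ] using congrFun h (i + 1)

/-- The partitions `μ` with at most `L` parts that interlace `lam`, that is,
`lam 1 ≥ μ 1 ≥ lam 2 ≥ ⋯ ≥ μ L ≥ lam (L + 1)`. -/
def interlacing (L : ℕ) (lam : ℕ → ℕ) : Finset (ℕ → ℕ) :=
  (Fintype.piFinset fun i : Fin L => Finset.Icc (lam (i + 2)) (lam (i + 1))).map
    ⟨ofParts, ofParts_injective L⟩

lemma mem_interlacing {L : ℕ} {lam mu : ℕ → ℕ} :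
    mu ∈ interlacing L lam ↔ (∀ k ∈ Set.Icc 1 L, lam (k + 1) ≤ mu k ∧ mu k ≤ lam k) ∧
      ∀ k ∉ Set.Icc 1 L, mu k = 0 := by
  simp only [interlacing, Finset.mem_map, Fintype.mem_piFinset, Finset.mem_Icc]
  constructor
  · rintro ⟨p, hp, rfl⟩
    refine ⟨fun k hk => ?_, fun k hk => dif_neg hk⟩
    obtain ⟨i, rfl⟩ : ∃ i : Fin L, k = i + 1 := ⟨⟨k - 1, by grind⟩, by grind⟩
    simpa [ofParts_succ] using hp i
  · rintro ⟨hmu, hzero⟩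
    refine ⟨fun i => mu (i + 1), fun i => hmu _ ⟨by omega, i.2⟩, funext fun k => ?_⟩
    by_cases hk : 1 ≤ k ∧ k ≤ L
    · simp [ofParts, hk]
    · simpa [ofParts, hk] using (hzero k hk).symm

lemma antitoneOn_of_mem_interlacing {L : ℕ} {lam mu : ℕ → ℕ}
    (hlam : AntitoneOn lam (Set.Icc 1 (L + 1))) (hmu : mu ∈ interlacing L lam) :
    AntitoneOn mu (Set.Icc 1 L) := by
  intro i hi j hj hij
  rcases hij.eq_or_lt with rfl | hlt
  · rfl
  obtain ⟨hmu, -⟩ := mem_interlacing.1 hmu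
  exact (hmu j hj).2.trans ((hlam (by grind) (by grind) hlt).trans (hmu i hi).1)

lemma size_sub_size_of_mem_interlacing {L : ℕ} {lam mu : ℕ → ℕ} (hmu : mu ∈ interlacing L lam) :
    size (L + 1) lam - size L mu =
      lam (L + 1) + ∑ i : Fin L, (lam (i + 1) - mu (i + 1)) := by
  have hle : ∀ k ∈ Finset.range L, mu (k + 1) ≤ lam (k + 1) := fun k hk =>
    ((mem_interlacing.1 hmu).1 (k + 1) (by grind)).2
  rw [Fin.sum_univ_eq_sum_range fun k => lam (k + 1) - mu (k + 1), Finset.sum_tsub_distrib _ hle,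
    size, size, Finset.sum_range_succ, add_comm, Nat.add_sub_assoc (Finset.sum_le_sum hle)]

end Interlacing

section Alternant

variable {R : Type*} [CommRing R] {L : ℕ}

/-- The alternant `a_{λ+δ}`, in the variables `x`, of the partition with parts
`lam 1, …, lam L`. -/
def alternant (x : Fin L → R) (lam : ℕ → ℕ) : R :=
  (Matrix.of fun i j : Fin L => x i ^ (lam (j + 1) + (j.rev : ℕ))).det

lemma alternant_succ_eq_prod_mul_det (x : Fin (L + 1) → R) {lam : ℕ → ℕ}
    (hlam : AntitoneOn lam (Set.Icc 1 (L + 1))) :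
    alternant x lam = x (Fin.last L) ^ lam (L + 1) *
      ((∏ i : Fin L, (x i.castSucc - x (Fin.last L))) * (Matrix.of fun i j : Fin L =>
        ∑ k ∈ Finset.Icc (lam (j + 2)) (lam (j + 1)),
          x (Fin.last L) ^ (lam (j + 1) - k) * x i.castSucc ^ (k + (j.rev : ℕ))).det) := by
  set t := x (Fin.last L) with ht
  let g (y : R) (j : Fin L) : R := ∑ k ∈ Finset.Icc (lam (j + 2)) (lam (j + 1)),
    t ^ (lam (j + 1) - k) * y ^ (k + (j.rev : ℕ))
  have hstep (y : R) (j : Fin L) :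
      y ^ (lam (j + 1) + ((j.rev : ℕ) + 1)) -
        t ^ (lam (j + 1) + 1 - lam (j + 2)) * y ^ (lam (j + 2) + (j.rev : ℕ)) = (y - t) * g y j :=
    pow_sub_pow_mul_pow (hlam (by grind) (by grind) (by omega)) _ y t
  let B : Matrix (Fin (L + 1)) (Fin (L + 1)) R := Matrix.of fun i =>
    Fin.snoc (fun j => (x i - t) * g (x i) j) (x i ^ lam (L + 1))
  have hB : alternant x lam = B.det := by
    refine det_eq_of_forall_col_eq_smul_add_succ
      (fun j => t ^ (lam (j + 1) + 1 - lam (j + 2))) (fun i => by simp [B]) fun i j => ?_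
    simp only [B, Matrix.of_apply, Fin.snoc_castSucc, ← hstep, Fin.val_castSucc, Fin.val_succ,
      Fin.rev_castSucc, Fin.rev_succ, sub_add_cancel]
  rw [hB, det_eq_mul_det_of_last_row B fun j => by simp [B, ht], ← Matrix.det_mul_column]
  simp [B, g, ht, Matrix.submatrix]

theorem alternant_succ (x : Fin (L + 1) → R) {lam : ℕ → ℕ}
    (hlam : AntitoneOn lam (Set.Icc 1 (L + 1))) :
    alternant x lam = (∏ i : Fin L, (x i.castSucc - x (Fin.last L))) *
      ∑ mu ∈ interlacing L lam, x (Fin.last L) ^ (size (L + 1) lam - size L mu) *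
        alternant (fun i => x i.castSucc) mu := by
  set t := x (Fin.last L) with ht
  rw [alternant_succ_eq_prod_mul_det x hlam, ← ht, mul_left_comm, det_sum_col
    (fun j : Fin L => Finset.Icc (lam (j + 2)) (lam (j + 1)))
    (fun j k i => t ^ (lam (j + 1) - k) * x i.castSucc ^ (k + (j.rev : ℕ))), Finset.mul_sum]
  congr 1
  conv_rhs => rw [interlacing, Finset.sum_map]
  refine Finset.sum_congr rfl fun p hp => ?_
  have hmem : ofParts p ∈ interlacing L lam := Finset.mem_map_of_mem _ hp
  have hrow := Matrix.det_mul_row (fun j : Fin L => t ^ (lam (j + 1) - p j))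
    (Matrix.of fun i j => x i.castSucc ^ (p j + (j.rev : ℕ)))
  simp only [Matrix.of_apply] at hrow
  rw [hrow, Function.Embedding.coeFn_mk, size_sub_size_of_mem_interlacing hmem, pow_add,
    ← Finset.prod_pow_eq_pow_sum, mul_assoc]
  simp only [alternant, ofParts_succ]

lemma alternant_zero_succ (x : Fin (L + 1) → R) :
    alternant x 0 =
      (∏ i : Fin L, (x i.castSucc - x (Fin.last L))) * alternant (fun i => x i.castSucc) 0 := by
  have hmu : interlacing L 0 = {0} := by
    ext mu
    simp only [mem_interlacing, Finset.mem_singleton, funext_iff, Pi.zero_apply, zero_le,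
      Nat.le_zero, true_and]
    grind
  rw [alternant_succ x (lam := 0) antitoneOn_const, hmu, Finset.sum_singleton]
  simp [size]

lemma isRegular_alternant_zero {x : Fin L → R} (hx : ∀ i j, i ≠ j → IsRegular (x i - x j)) :
    IsRegular (alternant x 0) := by
  induction L with
  | zero => simpa [alternant] using isRegular_one
  | succ L ih =>
    rw [alternant_zero_succ]
    refine (IsRegular.prod fun i _ => hx _ _ i.castSucc_ne_last).mul (ih fun i j hij => ?_)
    exact hx _ _ (Fin.castSucc_injective L |>.ne hij)

end Alternant

/-! ### Tableaux and Schur polynomials -/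

section Tableaux

lemma InShape.mono {L M : ℕ} {lam mu : ℕ → ℕ} (hLM : L ≤ M) (h : ∀ k ∈ Set.Icc 1 L, mu k ≤ lam k)
    {b : ℕ × ℕ} (hb : InShape L mu b) : InShape M lam b :=
  ⟨hb.1, hb.2.1.trans hLM, hb.2.2.1, hb.2.2.2.trans (h _ ⟨hb.1, hb.2.1⟩)⟩

lemma InShape.of_le_left {L : ℕ} {lam : ℕ → ℕ} {i j j' : ℕ} (h : InShape L lam (i, j'))
    (hj : 1 ≤ j) (hjj' : j ≤ j') : InShape L lam (i, j) :=
  ⟨h.1, h.2.1, hj, hjj'.trans h.2.2.2⟩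

lemma eq_of_inShape_iff {L : ℕ} {lam mu : ℕ → ℕ} (hlam : ∀ k ∉ Set.Icc 1 L, lam k = 0)
    (hmu : ∀ k ∉ Set.Icc 1 L, mu k = 0) (h : ∀ b, InShape L lam b ↔ InShape L mu b) :
    lam = mu := by
  funext k
  by_cases hk : k ∈ Set.Icc 1 L
  · have hrow (j : ℕ) (hj : 1 ≤ j) : j ≤ lam k ↔ j ≤ mu k := by
      simpa [InShape, hk.1, hk.2, hj] using h (k, j)
    have := hrow (lam k)
    have := hrow (mu k)
    omega
  · rw [hlam k hk, hmu k hk]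

/-- The boxes of the Young diagram of the partition with parts `lam 1, …, lam L`. -/
def boxes (L : ℕ) (lam : ℕ → ℕ) : Finset (ℕ × ℕ) :=
  ((Finset.Icc 1 L).sigma fun i => Finset.Icc 1 (lam i)).map
    (Equiv.sigmaEquivProd ℕ ℕ).toEmbedding

lemma mem_boxes {L : ℕ} {lam : ℕ → ℕ} {b : ℕ × ℕ} : b ∈ boxes L lam ↔ InShape L lam b := by
  simp [boxes, InShape, and_assoc]

lemma card_boxes (L : ℕ) (lam : ℕ → ℕ) : (boxes L lam).card = size L lam := by
  rw [size, Finset.range_eq_Ico, Finset.sum_Ico_add', zero_add, Finset.Ico_add_one_right_eq_Icc]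
  simp [boxes]

/-- Semistandard Young tableaux of shape `lam` and arbitrary content, with the conventions of
`IsSSYT`: entries in `[L]`, and the value zero outside the shape. -/
structure IsTableau (L : ℕ) (lam : ℕ → ℕ) (T : ℕ × ℕ → ℕ) : Prop where
  eq_zero {b : ℕ × ℕ} (hb : ¬ InShape L lam b) : T b = 0
  mem_Icc {b : ℕ × ℕ} (hb : InShape L lam b) : T b ∈ Set.Icc 1 L
  row_le {i j j' : ℕ} (hj : InShape L lam (i, j)) (hj' : InShape L lam (i, j')) (h : j ≤ j') :
    T (i, j) ≤ T (i, j')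
  col_lt {i i' j : ℕ} (hi : InShape L lam (i, j)) (hi' : InShape L lam (i', j)) (h : i < i') :
    T (i, j) < T (i', j)

/-- The number of entries of the tableau `T` equal to `k`. -/
def content (L : ℕ) (lam : ℕ → ℕ) (T : ℕ × ℕ → ℕ) (k : ℕ) : ℕ :=
  ((boxes L lam).filter fun b => T b = k).card

/-- The lengths of the first `L` rows of the shape formed by the entries of `T` that are at
most `L`. -/
def innerRow (L : ℕ) (lam : ℕ → ℕ) (T : ℕ × ℕ → ℕ) (k : ℕ) : ℕ :=
  if k ∈ Finset.Icc 1 L then Nat.findGreatest (fun j => T (k, j) ≤ L) (lam k) else 0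

/-- The tableau obtained from `T` by erasing the entries larger than `L`. -/
def truncate (L : ℕ) (T : ℕ × ℕ → ℕ) (b : ℕ × ℕ) : ℕ := if T b ≤ L then T b else 0

open Classical in
/-- The tableau of shape `lam` obtained from `T` by writing `L + 1` in every box that `T` leaves
empty; inverse to `truncate`. -/
noncomputable def fill (L : ℕ) (lam : ℕ → ℕ) (T : ℕ × ℕ → ℕ) (b : ℕ × ℕ) : ℕ :=
  if InShape (L + 1) lam b ∧ T b = 0 then L + 1 else T b

namespace IsTableau

variable {L : ℕ} {lam mu : ℕ → ℕ} {T : ℕ × ℕ → ℕ}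

lemma inShape_iff_ne_zero (hT : IsTableau L lam T) {b : ℕ × ℕ} : InShape L lam b ↔ T b ≠ 0 :=
  ⟨fun hb => Nat.one_le_iff_ne_zero.1 (hT.mem_Icc hb).1,
    fun hb => not_not.1 fun hb' => hb (hT.eq_zero hb')⟩

lemma apply_le (hT : IsTableau L lam T) (b : ℕ × ℕ) : T b ≤ L := by
  by_cases hb : InShape L lam b
  · exact (hT.mem_Icc hb).2
  · exact (hT.eq_zero hb).trans_le L.zero_le

lemma le_apply (hT : IsTableau L lam T) (hlam : AntitoneOn lam (Set.Icc 1 L)) {i j : ℕ}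
    (hb : InShape L lam (i, j)) : i ≤ T (i, j) := by
  induction i with
  | zero => exact Nat.zero_le _
  | succ i ih =>
    rcases Nat.eq_zero_or_pos i with rfl | hi
    · exact (hT.mem_Icc hb).1
    have hle : i + 1 ≤ L := hb.2.1
    have hb' : InShape L lam (i, j) := ⟨hi, i.le_succ.trans hle, hb.2.2.1,
      hb.2.2.2.trans (hlam (by grind) (by grind) i.le_succ)⟩
    exact (ih hb').trans_lt (hT.col_lt hb' hb i.lt_succ_self)

lemma inShape_innerRow_iff (hT : IsTableau (L + 1) lam T)
    (hlam : AntitoneOn lam (Set.Icc 1 (L + 1))) {b : ℕ × ℕ} :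
    InShape L (innerRow L lam T) b ↔ InShape (L + 1) lam b ∧ T b ≤ L := by
  obtain ⟨i, j⟩ := b
  constructor
  · rintro ⟨hi, hiL, hj, hji⟩
    simp only [innerRow, Finset.mem_Icc.2 ⟨hi, hiL⟩, if_true] at hi hiL hj hji
    have hg : InShape (L + 1) lam (i, Nat.findGreatest (fun j => T (i, j) ≤ L) (lam i)) :=
      ⟨hi, hiL.trans L.le_succ, hj.trans hji, Nat.findGreatest_le _⟩
    have hb := hg.of_le_left hj hji
    refine ⟨hb, (hT.row_le hb hg hji).trans ?_⟩
    exact Nat.findGreatest_of_ne_zero (P := fun j => T (i, j) ≤ L) rfl (by grind)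
  · rintro ⟨hb, hle⟩
    have hiL := (hT.le_apply hlam hb).trans hle
    refine ⟨hb.1, hiL, hb.2.2.1, ?_⟩
    simp only [innerRow, Finset.mem_Icc.2 ⟨hb.1, hiL⟩, if_true]
    exact Nat.le_findGreatest hb.2.2.2 hle

lemma innerRow_mem_interlacing (hT : IsTableau (L + 1) lam T)
    (hlam : AntitoneOn lam (Set.Icc 1 (L + 1))) :
    innerRow L lam T ∈ interlacing L lam := by
  refine mem_interlacing.2 ⟨fun k hk => ?_, fun k hk => if_neg (by simpa using hk)⟩
  simp only [innerRow, Finset.mem_Icc.2 hk, if_true]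
  refine ⟨?_, Nat.findGreatest_le _⟩
  rcases Nat.eq_zero_or_pos (lam (k + 1)) with hzero | hpos
  · simp [hzero]
  have hanti : lam (k + 1) ≤ lam k := hlam (by grind) (by grind) k.le_succ
  have hb : InShape (L + 1) lam (k + 1, lam (k + 1)) := ⟨by grind, by grind, hpos, le_rfl⟩
  have hb' : InShape (L + 1) lam (k, lam (k + 1)) := ⟨by grind, by grind, hpos, hanti⟩
  refine Nat.le_findGreatest hanti ?_
  have := hT.col_lt hb' hb k.lt_succ_self
  have := hT.apply_le (k + 1, lam (k + 1))
  omega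

lemma truncate_innerRow (hT : IsTableau (L + 1) lam T)
    (hlam : AntitoneOn lam (Set.Icc 1 (L + 1))) :
    IsTableau L (innerRow L lam T) (truncate L T) where
  eq_zero hb := by
    rw [hT.inShape_innerRow_iff hlam, hT.inShape_iff_ne_zero] at hb
    grind [truncate]
  mem_Icc hb := by
    obtain ⟨hb, hle⟩ := (hT.inShape_innerRow_iff hlam).1 hb
    simpa [truncate, hle] using (hT.mem_Icc hb).1
  row_le hj hj' h := by
    rw [hT.inShape_innerRow_iff hlam] at hj hj'
    simpa [truncate, hj.2, hj'.2] using hT.row_le hj.1 hj'.1 h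
  col_lt hi hi' h := by
    rw [hT.inShape_innerRow_iff hlam] at hi hi'
    simpa [truncate, hi.2, hi'.2] using hT.col_lt hi.1 hi'.1 h

lemma fill_truncate (hT : IsTableau (L + 1) lam T) : fill L lam (truncate L T) = T := by
  funext b
  have := hT.inShape_iff_ne_zero (b := b)
  have := hT.apply_le b
  grind [fill, truncate]

lemma truncate_fill (hT : IsTableau L mu T) : truncate L (fill L lam T) = T := by
  funext b
  have := hT.apply_le b
  grind [fill, truncate]

lemma inShape_and_fill_le_iff (hT : IsTableau L mu T) (hmu : mu ∈ interlacing L lam) {b : ℕ × ℕ} :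
    InShape (L + 1) lam b ∧ fill L lam T b ≤ L ↔ InShape L mu b := by
  have hsub : InShape L mu b → InShape (L + 1) lam b :=
    InShape.mono L.le_succ fun k hk => ((mem_interlacing.1 hmu).1 k hk).2
  have := hT.apply_le b
  rw [hT.inShape_iff_ne_zero] at hsub ⊢
  grind [fill]

lemma fill_of_mem_interlacing (hT : IsTableau L mu T) (hlam : AntitoneOn lam (Set.Icc 1 (L + 1)))
    (hmu : mu ∈ interlacing L lam) : IsTableau (L + 1) lam (fill L lam T) where
  eq_zero {b} hb := by
    have := hT.inShape_iff_ne_zero (b := b)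
    have := hT.inShape_and_fill_le_iff hmu (b := b)
    grind [fill]
  mem_Icc {b} hb := by
    have := hT.apply_le b
    grind [fill]
  row_le {i j j'} hj hj' h := by
    have hbound := hT.apply_le (i, j)
    rcases eq_or_ne (T (i, j')) 0 with hzero | hne
    · grind [fill]
    have hmu' := hT.inShape_iff_ne_zero.2 hne
    have hmu := hmu'.of_le_left hj.2.2.1 h
    have := hT.row_le hmu hmu' h
    have := hT.inShape_iff_ne_zero.1 hmu
    grind [fill]
  col_lt {i i' j} hi hi' h := by
    have hiL : i < L + 1 := h.trans_le hi'.2.1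
    have hle : lam i' ≤ mu i := (hlam (by grind) (by grind [InShape]) h).trans
      ((mem_interlacing.1 hmu).1 i ⟨hi.1, by omega⟩).1
    have hmu : InShape L mu (i, j) := ⟨hi.1, Nat.lt_succ_iff.1 hiL, hi.2.2.1, hi'.2.2.2.trans hle⟩
    have hbound := hT.mem_Icc hmu
    rcases eq_or_ne (T (i', j)) 0 with hzero | hne
    · grind [fill]
    have := hT.col_lt hmu (hT.inShape_iff_ne_zero.2 hne) h
    grind [fill]

lemma innerRow_fill (hT : IsTableau L mu T) (hlam : AntitoneOn lam (Set.Icc 1 (L + 1)))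
    (hmu : mu ∈ interlacing L lam) : innerRow L lam (fill L lam T) = mu := by
  have hfill := hT.fill_of_mem_interlacing hlam hmu
  refine eq_of_inShape_iff (mem_interlacing.1 (hfill.innerRow_mem_interlacing hlam)).2
    (mem_interlacing.1 hmu).2 fun b => ?_
  rw [hfill.inShape_innerRow_iff hlam, hT.inShape_and_fill_le_iff hmu]

lemma content_truncate (hT : IsTableau (L + 1) lam T) (hlam : AntitoneOn lam (Set.Icc 1 (L + 1)))
    {k : ℕ} (hk : k ∈ Set.Icc 1 L) :
    content L (innerRow L lam T) (truncate L T) k = content (L + 1) lam T k := by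
  rw [content, content]
  congr 1
  ext b
  simp only [Finset.mem_filter, mem_boxes, hT.inShape_innerRow_iff hlam]
  grind [truncate]

lemma content_last (hT : IsTableau (L + 1) lam T) (hlam : AntitoneOn lam (Set.Icc 1 (L + 1))) :
    content (L + 1) lam T (L + 1) = size (L + 1) lam - size L (innerRow L lam T) := by
  have hinner : boxes L (innerRow L lam T) = (boxes (L + 1) lam).filter fun b => ¬ T b = L + 1 := by
    ext b
    have := hT.apply_le b
    simp only [Finset.mem_filter, mem_boxes, hT.inShape_innerRow_iff hlam]
    grind
  rw [← card_boxes, ← card_boxes, hinner, content]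
  have := Finset.card_filter_add_card_filter_not (s := boxes (L + 1) lam) fun b => T b = L + 1
  omega

end IsTableau

lemma finite_setOf_isTableau (L : ℕ) (lam : ℕ → ℕ) : {T | IsTableau L lam T}.Finite := by
  refine Set.Finite.of_injOn (f := fun T (b : boxes L lam) => T b)
    (t := Set.Icc 0 fun _ => L) (fun T hT => ?_) (fun T hT T' hT' h => ?_) (Set.finite_Icc _ _)
  · exact ⟨fun b => Nat.zero_le _, fun b => hT.apply_le b⟩
  · funext b
    by_cases hb : InShape L lam b
    · exact congrFun h ⟨b, mem_boxes.2 hb⟩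
    · rw [hT.eq_zero hb, hT'.eq_zero hb]

/-- The semistandard Young tableaux of shape `lam` with entries in `[L]`, of arbitrary content. -/
noncomputable def tableaux (L : ℕ) (lam : ℕ → ℕ) : Finset (ℕ × ℕ → ℕ) :=
  (finite_setOf_isTableau L lam).toFinset

lemma mem_tableaux {L : ℕ} {lam : ℕ → ℕ} {T : ℕ × ℕ → ℕ} :
    T ∈ tableaux L lam ↔ IsTableau L lam T := by
  simp [tableaux]

end Tableaux

section Schur

variable {R : Type*} [CommSemiring R] {L : ℕ}

/-- The Schur polynomial of the partition with parts `lam 1, …, lam L`, as the generating function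
of semistandard Young tableaux, evaluated at `x`. -/
noncomputable def schur (x : Fin L → R) (lam : ℕ → ℕ) : R :=
  ∑ T ∈ tableaux L lam, ∏ k : Fin L, x k ^ content L lam T (k + 1)

lemma schur_fin_zero (x : Fin 0 → R) (lam : ℕ → ℕ) : schur x lam = 1 := by
  have htab : tableaux 0 lam = {0} := by
    ext T
    rw [mem_tableaux, Finset.mem_singleton]
    have hempty (b : ℕ × ℕ) : ¬ InShape 0 lam b := fun hb => (hb.1.trans hb.2.1).not_gt one_pos
    refine ⟨fun hT => funext fun b => hT.eq_zero (hempty b), ?_⟩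
    rintro rfl
    exact ⟨fun _ => rfl, fun hb => (hempty _ hb).elim, fun hb => (hempty _ hb).elim,
      fun hb => (hempty _ hb).elim⟩
  simp [schur, htab]

open Classical in
lemma sum_filter_innerRow_eq (x : Fin (L + 1) → R) {lam mu : ℕ → ℕ}
    (hlam : AntitoneOn lam (Set.Icc 1 (L + 1))) (hmu : mu ∈ interlacing L lam) :
    ∑ T ∈ tableaux (L + 1) lam with innerRow L lam T = mu,
        ∏ k : Fin (L + 1), x k ^ content (L + 1) lam T (k + 1) =
      x (Fin.last L) ^ (size (L + 1) lam - size L mu) * schur (fun i => x i.castSucc) mu := by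
  rw [schur, Finset.mul_sum]
  refine Finset.sum_nbij' (truncate L) (fill L lam) (fun T hT => ?_) (fun T hT => ?_)
    (fun T hT => ?_) (fun T hT => ?_) fun T hT => ?_
  all_goals simp only [Finset.mem_filter, mem_tableaux] at hT ⊢
  · exact hT.2 ▸ hT.1.truncate_innerRow hlam
  · exact ⟨hT.fill_of_mem_interlacing hlam hmu, hT.innerRow_fill hlam hmu⟩
  · exact hT.1.fill_truncate
  · exact hT.truncate_fill
  · obtain ⟨hT, rfl⟩ := hT
    rw [Fin.prod_univ_castSucc, Fin.val_last, hT.content_last hlam, mul_comm]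
    congr 1
    refine Finset.prod_congr rfl fun k _ => ?_
    rw [hT.content_truncate hlam (by simp), Fin.val_castSucc]

theorem schur_succ (x : Fin (L + 1) → R) {lam : ℕ → ℕ}
    (hlam : AntitoneOn lam (Set.Icc 1 (L + 1))) :
    schur x lam = ∑ mu ∈ interlacing L lam,
      x (Fin.last L) ^ (size (L + 1) lam - size L mu) * schur (fun i => x i.castSucc) mu := by
  classical
  rw [schur, ← Finset.sum_fiberwise_of_maps_to fun T hT =>
    (mem_tableaux.1 hT).innerRow_mem_interlacing hlam]
  exact Finset.sum_congr rfl fun mu hmu => sum_filter_innerRow_eq x hlam hmu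

end Schur

theorem alternant_eq_alternant_zero_mul_schur {R : Type*} [CommRing R] {L : ℕ} (x : Fin L → R)
    {lam : ℕ → ℕ} (hlam : AntitoneOn lam (Set.Icc 1 L)) :
    alternant x lam = alternant x 0 * schur x lam := by
  induction L generalizing lam with
  | zero => simp [alternant, schur_fin_zero]
  | succ L ih =>
    rw [alternant_succ x hlam, schur_succ x hlam, alternant_zero_succ, Finset.mul_sum,
      Finset.mul_sum]
    refine Finset.sum_congr rfl fun mu hmu => ?_
    rw [ih _ (antitoneOn_of_mem_interlacing hlam hmu)]
    ring

/-! ### Grassmannian permutations -/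

lemma prod_eq_prod_castLE {M : Type*} [CommMonoid M] {n L : ℕ} (hL : L ≤ n) {f : Fin n → M}
    (hf : ∀ j : Fin n, L ≤ j → f j = 1) : ∏ j, f j = ∏ i, f (Fin.castLE hL i) := by
  refine ((Finset.prod_map _ (Fin.castLEEmb hL) f).symm.trans
    (Finset.prod_subset (Finset.subset_univ _) fun j _ hj => hf j ?_)).symm
  by_contra! hlt
  exact hj (Finset.mem_map.2 ⟨⟨j, hlt⟩, Finset.mem_univ _, rfl⟩)

/-- `w` is the grassmannian permutation of the partition `lam₁ ≥ ⋯ ≥ lam_L`, with a descent at most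
at `L`. The one-based formula `w(i) = i + lam_{L-i+1}` is shifted to the indexing of `Fin n`. -/
structure IsGrassmannian {n : ℕ} (L : ℕ) (lam : ℕ → ℕ) (w : Equiv.Perm (Fin n)) : Prop where
  apply_of_lt {i : Fin n} (hi : (i : ℕ) < L) : (w i : ℕ) = i + lam (L - i)
  strictMonoOn : StrictMonoOn w {i | L ≤ i}

/-- The permutation obtained from `w` by reversing the order of its first `L` values. -/
noncomputable def reverseInitial {n L : ℕ} (hL : L ≤ n) (w : Equiv.Perm (Fin n)) :
    Equiv.Perm (Fin n) :=
  w * Equiv.Perm.viaEmbeddingHom (Fin.castLEEmb hL) Fin.revPerm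

lemma reverseInitial_castLE {n L : ℕ} (hL : L ≤ n) (w : Equiv.Perm (Fin n)) (i : Fin L) :
    reverseInitial hL w (Fin.castLE hL i) = w (Fin.castLE hL i.rev) :=
  congrArg w (Equiv.Perm.viaEmbedding_apply Fin.revPerm (Fin.castLEEmb hL) i)

lemma reverseInitial_of_le {n L : ℕ} (hL : L ≤ n) (w : Equiv.Perm (Fin n)) {j : Fin n}
    (hj : L ≤ j) : reverseInitial hL w j = w j :=
  congrArg w (Equiv.Perm.viaEmbedding_apply_of_notMem Fin.revPerm (Fin.castLEEmb hL) j
    (by rintro ⟨i, rfl⟩; exact hj.not_gt i.isLt))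

namespace IsGrassmannian

variable {n L : ℕ} {lam : ℕ → ℕ} {w : Equiv.Perm (Fin n)} (hL : L ≤ n)
  (hw : IsGrassmannian L lam w)
include hw

lemma code_reverseInitial_of_le {j : Fin n} (hj : L ≤ j) : code (reverseInitial hL w) j = 0 :=
  code_eq_zero fun k hk => by
    have hkL : L ≤ k := hj.trans hk.le
    rw [reverseInitial_of_le hL w hj, reverseInitial_of_le hL w hkL]
    exact hw.strictMonoOn hj hkL hk

variable (hlam : AntitoneOn lam (Set.Icc 1 L))
include hlam

lemma strictMono_castLE : StrictMono fun i => w (Fin.castLE hL i) := fun i j hij => by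
  have hle : lam (L - i) ≤ lam (L - j) :=
    hlam ⟨by omega, by omega⟩ ⟨by omega, by omega⟩ (by omega)
  rw [Fin.lt_def, hw.apply_of_lt (by simp), hw.apply_of_lt (by simp), Fin.val_castLE,
    Fin.val_castLE]
  omega

lemma code_reverseInitial_castLE (i : Fin L) :
    code (reverseInitial hL w) (Fin.castLE hL i) = lam (i + 1) + i.rev := by
  rw [code_eq_apply fun j hj => ?_]
  · have hrev : L - (i.rev : ℕ) = i + 1 := by
      rw [Fin.val_rev]
      omega
    rw [reverseInitial_castLE, hw.apply_of_lt i.rev.isLt, Fin.val_castLE, hrev, add_comm]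
  · by_contra! hle
    obtain ⟨j, rfl⟩ : ∃ k, Fin.castLE hL k = j := ⟨⟨j, (Fin.le_def.1 hle).trans_lt i.isLt⟩, rfl⟩
    rw [reverseInitial_castLE, reverseInitial_castLE] at hj
    exact hj.not_ge ((hw.strictMono_castLE hL hlam).monotone (Fin.rev_le_rev.2 hle))

lemma isDominant_reverseInitial : IsDominant (reverseInitial hL w) := fun i j hij => by
  rcases le_or_gt L j with hj | hj
  · exact (hw.code_reverseInitial_of_le hL hj).trans_le (Nat.zero_le _)
  obtain ⟨j, rfl⟩ : ∃ k, Fin.castLE hL k = j := ⟨⟨j, hj⟩, rfl⟩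
  obtain ⟨i, rfl⟩ : ∃ k, Fin.castLE hL k = i := ⟨⟨i, (Fin.le_def.1 hij).trans_lt hj⟩, rfl⟩
  rw [hw.code_reverseInitial_castLE hL hlam, hw.code_reverseInitial_castLE hL hlam]
  have hij : i ≤ j := hij
  have hle : lam (j + 1) ≤ lam (i + 1) :=
    hlam ⟨by omega, by omega⟩ ⟨by omega, by omega⟩ (by omega)
  exact add_le_add hle (Fin.rev_le_rev.2 hij)

end IsGrassmannian

theorem IsSchubertFamily_s19.eq_schur {R : Type*} [CommRing R] {n L : ℕ}
    {S : Equiv.Perm (Fin n) → MvPolynomial (Fin n) R} (hS : IsSchubertFamily_s19 S) (hL : L ≤ n)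
    {lam : ℕ → ℕ} (hlam : AntitoneOn lam (Set.Icc 1 L)) {w : Equiv.Perm (Fin n)}
    (hw : IsGrassmannian L lam w) :
    S w = schur (fun i => X (Fin.castLE hL i)) lam := by
  set ι := Fin.castLEEmb hL
  have hι (a b : Fin L) (hab : a ⋖ b) : ι a ⋖ ι b := by
    rw [Fin.covBy_iff] at hab ⊢
    exact hab
  have hdominant : S (reverseInitial hL w) = ∏ i, X (ι i) ^ (lam (i + 1) + (i.rev : ℕ)) := by
    rw [hS.eq_prod_X_pow_code (hw.isDominant_reverseInitial hL hlam),
      prod_eq_prod_castLE hL fun j hj => by rw [hw.code_reverseInitial_of_le hL hj, pow_zero]]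
    simp only [hw.code_reverseInitial_castLE hL hlam, ι, Fin.castLEEmb_apply]
  have halternants : alternant (fun i => X (ι i)) lam = alternant (fun i => X (ι i)) 0 * S w := by
    have hchain := hS.antisymm_apply_mul_revPerm hι (hw.strictMono_castLE hL hlam)
    rw [← reverseInitial, hdominant, antisymm_prod_X_pow, antisymm_prod_X_pow] at hchain
    simpa [alternant] using hchain
  have hregular : IsRegular (alternant (fun i => X (R := R) (ι i)) 0) :=
    isRegular_alternant_zero fun i j hij => isRegular_X_sub_X (ι.injective.ne hij)
  refine hregular.left ?_
  exact halternants.symm.trans (alternant_eq_alternant_zero_mul_schur _ hlam)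

lemma content_eq_ncard (L : ℕ) (lam : ℕ → ℕ) (T : ℕ × ℕ → ℕ) (k : ℕ) :
    content L lam T k = {b | InShape L lam b ∧ T b = k}.ncard := by
  rw [content, ← Set.ncard_coe_finset]
  simp [mem_boxes]

lemma IsTableau.content_eq_zero {L : ℕ} {lam : ℕ → ℕ} {T : ℕ × ℕ → ℕ} (hT : IsTableau L lam T)
    {k : ℕ} (hk : L < k) : content L lam T k = 0 :=
  Finset.card_eq_zero.2 (Finset.filter_eq_empty_iff.2 fun b _ hb =>
    hk.not_ge (hb ▸ hT.apply_le b))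

lemma isSSYT_iff {n L : ℕ} {lam : ℕ → ℕ} {α : Fin n → ℕ} {T : ℕ × ℕ → ℕ} :
    IsSSYT n L lam α T ↔ IsTableau L lam T ∧ (fun k : Fin n => content L lam T (k + 1)) = α := by
  simp only [IsSSYT, funext_iff, content_eq_ncard]
  exact ⟨fun ⟨h₁, h₂, h₃, h₄, h₅⟩ => ⟨⟨h₁ _, h₂ _, h₃ _ _ _, h₄ _ _ _⟩, h₅⟩,
    fun ⟨h, h₅⟩ => ⟨fun _ => h.eq_zero, fun _ => h.mem_Icc, fun _ _ _ => h.row_le,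
      fun _ _ _ => h.col_lt, h₅⟩⟩

theorem coeff_schur_eq_kostka {R : Type*} [CommSemiring R] {n L : ℕ} (hL : L ≤ n) (lam : ℕ → ℕ)
    (α : Fin n → ℕ) :
    coeff (Finsupp.equivFunOnFinite.symm α) (schur (fun i => X (Fin.castLE hL i)) lam) =
      ({T | IsSSYT n L lam α T}.ncard : R) := by
  classical
  have hmonomial {T} (hT : T ∈ tableaux L lam) :
      (∏ i : Fin L, X (Fin.castLE hL i) ^ content L lam T (i + 1) : MvPolynomial (Fin n) R) =
        monomial (Finsupp.equivFunOnFinite.symm fun k : Fin n => content L lam T (k + 1)) 1 := by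
    rw [monomial_eq, map_one, one_mul, Finsupp.prod_fintype _ _ fun _ => pow_zero _,
      prod_eq_prod_castLE hL fun j hj => ?_]
    · rfl
    · rw [Finsupp.equivFunOnFinite_symm_apply_apply,
        (mem_tableaux.1 hT).content_eq_zero (by omega), pow_zero]
  have hset : {T | IsSSYT n L lam α T} =
      ((tableaux L lam).filter fun T => (fun k : Fin n => content L lam T (k + 1)) = α :
        Finset _) := by
    ext T
    simp [isSSYT_iff, mem_tableaux]
  rw [schur, Finset.sum_congr rfl fun T => hmonomial, coeff_sum, hset, Set.ncard_coe_finset]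
  simp only [coeff_monomial, EmbeddingLike.apply_eq_iff_eq, Finset.sum_boole]

theorem coeff_schubert_grassmannian_eq_kostka_general {R : Type*} [CommRing R] {n L : ℕ}
    {S : Equiv.Perm (Fin n) → MvPolynomial (Fin n) R} (hS : IsSchubertFamily_s19 S) (hL : L ≤ n)
    {lam : ℕ → ℕ} (hlam : AntitoneOn lam (Set.Icc 1 L)) {w : Equiv.Perm (Fin n)}
    (hw : IsGrassmannian L lam w) (α : Fin n → ℕ) :
    coeff (Finsupp.equivFunOnFinite.symm α) (S w) = ({T | IsSSYT n L lam α T}.ncard : R) := by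
  rw [hS.eq_schur hL hlam hw, coeff_schur_eq_kostka]

/-- Let `S` be the family of Schubert polynomials of `S_n` (characterized by
`S w₀ = x₀^{n-1} x₁^{n-2} ⋯` for the longest element and the divided-difference
recurrence `(x_i - x_{i+1}) · S w = S (w s_i) - s_i (S (w s_i))` when `w i < w (i+1)`).
Let `w = w_λ` be the grassmannian permutation of the partition `λ₁ ≥ ⋯ ≥ λ_L`
(in 1-based terms `w_λ(i) = i + λ_{L-i+1}` for `i ≤ L`, with at most one descent,
at `L`).  Then the coefficient of `x^α` in `S w_λ` equals the Kostka number
`K_{λ,α}`, the number of semistandard Young tableaux of shape `λ` and content `α`. -/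
theorem coeff_schubert_grassmannian_eq_kostka (n L : ℕ) (lam : ℕ → ℕ)
    (S : Equiv.Perm (Fin n) → MvPolynomial (Fin n) ℚ)
    (hlong : S Fin.revPerm = ∏ i : Fin n, X i ^ (n - 1 - (i : ℕ)))
    (hrec : ∀ (w : Equiv.Perm (Fin n)) (i : ℕ) (h : i + 1 < n),
      w ⟨i, by omega⟩ < w ⟨i + 1, h⟩ →
        (X (⟨i, by omega⟩ : Fin n) - X ⟨i + 1, h⟩) * S w =
          S (w * Equiv.swap ⟨i, by omega⟩ ⟨i + 1, h⟩) -
            rename (Equiv.swap (⟨i, by omega⟩ : Fin n) ⟨i + 1, h⟩)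
              (S (w * Equiv.swap ⟨i, by omega⟩ ⟨i + 1, h⟩)))
    (hL : L ≤ n)
    (hanti : ∀ i j, 1 ≤ i → i ≤ j → j ≤ L → lam j ≤ lam i)
    (w : Equiv.Perm (Fin n))
    (hw : ∀ i : Fin n, (i : ℕ) + 1 ≤ L → ((w i : ℕ) + 1 = (i : ℕ) + 1 + lam (L - (i : ℕ))))
    (hgrass : ∀ i j : Fin n, L ≤ (i : ℕ) → i < j → w i < w j)
    (α : Fin n → ℕ) :
    coeff (Finsupp.equivFunOnFinite.symm α) (S w) =
      ({T : ℕ × ℕ → ℕ | IsSSYT n L lam α T}.ncard : ℚ) :=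
  coeff_schubert_grassmannian_eq_kostka_general
    (.of_forall_succ hlong fun u i _ h => hrec u i h) hL
    (fun i hi j hj hij => hanti i j hi.1 hij hj.2)
    ⟨fun {i} hi => by have := hw i hi; omega, fun i hi j _ hij => hgrass i j hi hij⟩ α

end Schub
end
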